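/- Every S-squeezed sphere has the weak Lefschetz property. -/

import Mathlib

/-!
# The weak Lefschetz property of S-squeezed spheres

Let `B` be the squeezed `d`-ball of `U`.  Writing a facet `F_d(u)` as a union of pairs
`{i_j + 2j, i_j + 2j + 1}` followed by a final segment of `[n]`, let `R(u)` be the set of the
`deg u` left end points of its pairs.  Removing such an end point from `F_d(u)` gives a face that
also lies in a facet of larger rank, the rank being the sum of the padded index sequence, and every
other facet containing `R(u)` has smaller rank than `F_d(u)` (`eq_or_rk_lt`).  Hence the faces of
`B` are covered by the intervals `[R(u), F_d(u)]` (`exists_interval`), as for a shelling.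

Take the `d + 1` Vandermonde forms `Θ_k = ∑ t_i^k x_i` with distinct `t_i`.  On every facet they
form a coordinate system, so any variable `x_j` with `j ∈ F_d(u)` is a combination of the `Θ_k`
and of variables outside `F_d(u)`.  Straightening with respect to the intervals shows that the
monomials `x_{R(u)}` generate the Stanley–Reisner ring of `B` over `K[Θ_0, …, Θ_d]`
(`straighten`, `exists_comb`), and restriction to the facets shows that they are independent
(`comb_eq_zero`).  The ring is thus free over `K[Θ_0, …, Θ_d]`, with a basis in degrees
`deg u ≤ d / 2`.  Use `θ = (Θ_0, …, Θ_{d-1})` and `ω = Θ_d`.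

* Freeness makes `ω` a nonzerodivisor on `K[B] / (θ)` (`ball_regular`).  The ball and its boundary
  sphere have the same faces with at most `d / 2` vertices (`mem_sphere_of_card_le`), so `K[B]` and
  `K[∂B]` agree in degrees up to `d / 2`, which gives injectivity there.
* As there are no basis elements in degrees above `d / 2`, `K[B] / (Θ_0, …, Θ_d)` vanishes in these
  degrees, and therefore so does its quotient `K[∂B] / (θ, ω)`; that is the surjectivity of `ω`.
* Faces of the sphere have at most `d` vertices, so straightening against the support of a monomial
  reduces everything modulo `θ` to squarefree monomials, and `θ` is a system of parameters
  (`finite_quotient`).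
-/

open scoped Classical
noncomputable section
namespace SqueezedSpheres

/-! ### Monomials of `K[x₁,x₂,…]` as finitely supported exponent vectors (index 0 unused). -/

/-- A monomial of the polynomial ring `S_[∞] = K[x₁,x₂,…]`, recorded by its exponent vector. -/
abbrev Mon : Type := ℕ →₀ ℕ

/-- The total degree of a monomial. -/
def degMon (u : Mon) : ℕ := u.sum fun _ e => e

/-- `m(u) = max{i : xᵢ divides u}` (with value `0` for `u = 1`). -/
def mVar (u : Mon) : ℕ := u.support.sup id

/-- The weakly increasing list `i₁ ≤ i₂ ≤ ⋯ ≤ i_d` of indices with `u = x_{i₁}⋯x_{i_d}`. -/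
def sortedIdx (u : Mon) : List ℕ := (Finsupp.toMultiset u).sort (· ≤ ·)

/-- `u ≼ v`: both have the same degree and, writing `u = x_{i₁}⋯x_{i_d}`,
`v = x_{j₁}⋯x_{j_d}` with weakly increasing indices, `i_k ≤ j_k` for all `k`. -/
def prec (u v : Mon) : Prop := List.Forall₂ (· ≤ ·) (sortedIdx u) (sortedIdx v)

/-- The squarefree monomial `x_S = ∏_{i ∈ S} x_i`. -/
def sqf (S : Finset ℕ) : Mon := Multiset.toFinsupp (S.val)

/-- `u` is a squarefree monomial. -/
def sqfreeMon (u : Mon) : Prop := ∀ j, u j ≤ 1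

/-- The lexicographic order: `u <_lex v` iff the leftmost index where the exponent
vectors differ has a larger exponent in `v`. -/
def lexLT (u v : Mon) : Prop := ∃ r, u r < v r ∧ ∀ t, t < r → u t = v t

/-- The degree reverse lexicographic order induced by `x₁ > x₂ > ⋯`:
`u <_drl v` iff `deg u < deg v`, or the degrees agree and at the largest index
where the exponent vectors differ `u` has the larger exponent. -/
def degrevlexLT (u v : Mon) : Prop :=
  degMon u < degMon v ∨ (degMon u = degMon v ∧ ∃ r, v r < u r ∧ ∀ t, r < t → u t = v t)

/-- The map `α^a` for a sequence `a : ℕ → ℕ` (with `a 0 = 0` in applications):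
`α^a(x_{i₁}x_{i₂}⋯x_{i_k}) = x_{i₁} x_{i₂+a₁} x_{i₃+a₂} ⋯ x_{i_k+a_{k-1}}`
for `i₁ ≤ i₂ ≤ ⋯ ≤ i_k`. -/
def alphaMap (a : ℕ → ℕ) (u : Mon) : Mon :=
  Multiset.toFinsupp (↑((sortedIdx u).mapIdx fun j i => i + a j))

variable (K : Type) [Field K]

/-! ### Monomial ideals of `S_[∞]`. -/

/-- The monomial `x^u` as a polynomial. -/
def mono (u : Mon) : MvPolynomial ℕ K := MvPolynomial.monomial u 1

/-- The monomial `x^u` belongs to the ideal `I`. -/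
def memMon (I : Ideal (MvPolynomial ℕ K)) (u : Mon) : Prop := mono K u ∈ I

/-- The (finitely generated) monomial ideal generated by a finite set of monomials. -/
def monSpan (G : Finset Mon) : Ideal (MvPolynomial ℕ K) :=
  Ideal.span ((fun u => mono K u) '' (↑G : Set Mon))

/-- `G(I)`: the minimal monomial generators of a monomial ideal `I`. -/
def GSet (I : Ideal (MvPolynomial ℕ K)) : Set Mon :=
  {u | memMon K I u ∧ ∀ i ∈ u.support, ¬ memMon K I (u - Finsupp.single i 1)}

/-- `max(I) = max{m(u) : u ∈ G(I)}`. -/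
def maxIdx (I : Ideal (MvPolynomial ℕ K)) : ℕ := sSup (mVar '' GSet K I)

/-- For `σ : M_[∞] → M_[∞]`, the ideal `σ(I)` generated by `{σ(u) : u ∈ G(I)}`. -/
def sigmaIdeal (σ : Mon → Mon) (I : Ideal (MvPolynomial ℕ K)) : Ideal (MvPolynomial ℕ K) :=
  Ideal.span ((fun u => mono K (σ u)) '' GSet K I)

/-- `I` is a finitely generated strongly stable (monomial) ideal of `S_[∞]`:
it is generated by finitely many monomials and is closed under the moves
`v ∈ I`, `u ≼ v` ⟹ `u ∈ I`. -/
def IsFGStronglyStable (I : Ideal (MvPolynomial ℕ K)) : Prop :=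
  (∃ G : Finset Mon, I = monSpan K G) ∧
    ∀ u v : Mon, memMon K I v → prec u v → memMon K I u

/-- `I` is a finitely generated squarefree strongly stable ideal of `S_[∞]`. -/
def IsFGSqfStronglyStable (I : Ideal (MvPolynomial ℕ K)) : Prop :=
  (∃ G : Finset Mon, (∀ u ∈ G, sqfreeMon u) ∧ I = monSpan K G) ∧
    ∀ u v : Mon, sqfreeMon u → sqfreeMon v → memMon K I v → prec u v → memMon K I u

/-! ### Simplicial homology over `K` of a finite simplicial complex,
used to define graded Betti numbers of monomial ideals (via upper Koszul
simplicial complexes, i.e. Hochster-type formulas) and the Cohen-Macaulay and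
Gorenstein* properties (via Reisner-type criteria). -/

/-- Boundary map coefficient: the coefficient of the face `T` in `∂S`. -/
def bCoeff (S T : Finset ℕ) : K :=
  if T ⊆ S ∧ S.card = T.card + 1 then
    (-1 : K) ^ (S.filter fun y => y < (S \ T).sum id).card
  else 0

/-- The simplicial boundary map from `i+1`-element faces to `i`-element faces. -/
def bdry (Δ : Finset (Finset ℕ)) (i : ℕ) :
    ((↥(Δ.filter fun S => S.card = i + 1) → K)) →ₗ[K]
      (↥(Δ.filter fun S => S.card = i) → K) :=
  Matrix.mulVecLin
    (Matrix.of fun (T : ↥(Δ.filter fun S => S.card = i))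
        (S : ↥(Δ.filter fun S => S.card = i + 1)) =>
      bCoeff K (↑S : Finset ℕ) (↑T : Finset ℕ))

/-- `redH K Δ i` is the dimension over `K` of the reduced simplicial homology
`H̃_{i-1}(Δ; K)`, computed at chain position `i` (faces of cardinality `i`);
in particular `redH K Δ 0 = dim H̃_{-1}`. -/
def redH (Δ : Finset (Finset ℕ)) : ℕ → ℕ
  | 0 => Module.finrank K (↥(Δ.filter fun S => S.card = 0) → K) -
      Module.finrank K ↥(LinearMap.range (bdry K Δ 0))
  | (i + 1) => Module.finrank K ↥(LinearMap.ker (bdry K Δ i)) -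
      Module.finrank K ↥(LinearMap.range (bdry K Δ (i + 1)))

/-- Membership of `x^b` in the monomial ideal generated by `G`. -/
def memGen (G : Finset Mon) (b : Mon) : Prop := ∃ g ∈ G, g ≤ b

/-- The upper Koszul simplicial complex `K^a(I)` of the monomial ideal generated
by `G` in multidegree `a`. -/
def koszulCx (G : Finset Mon) (a : Mon) : Finset (Finset ℕ) :=
  a.support.powerset.filter fun S => memGen G (a - sqf S)

/-- The graded Betti number `β_{i,j}` of the monomial ideal generated by `G`,
via Hochster's formula `β_{i,a}(I) = dim_K H̃_{i-1}(K^a(I); K)` summed over all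
multidegrees `a` of total degree `j`. -/
def bettiGens (G : Finset Mon) (i j : ℕ) : ℕ :=
  ∑ a ∈ (Finset.Iic (G.sum id)).filter fun a => degMon a = j,
    redH K (koszulCx G a) i

/-- The graded Betti numbers `β_{ij}(I) = dim_K Tor_i(I, K)_j` of a finitely
generated monomial ideal `I` (of value `0` on ideals that are not finitely
generated monomial ideals). -/
def betti (I : Ideal (MvPolynomial ℕ K)) (i j : ℕ) : ℕ :=
  if h : ∃ G : Finset Mon, I = monSpan K G then bettiGens K h.choose i j else 0

/-- The graded Betti numbers `β_{ij}(R/I)` of the quotient by a finitely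
generated monomial ideal. -/
def bettiQ (I : Ideal (MvPolynomial ℕ K)) (i j : ℕ) : ℕ :=
  if i = 0 then (if j = 0 then 1 else 0) else betti K I (i - 1) j

/-- `β_{ij}(R/I)` allowing integer indices (`0` for negative indices). -/
def bettiQZ (I : Ideal (MvPolynomial ℕ K)) (i j : ℤ) : ℕ :=
  if 0 ≤ i ∧ 0 ≤ j then bettiQ K I i.toNat j.toNat else 0

/-! ### Stable operators. -/

/-- A map `σ : M_[∞] → M_[∞]` is a stable operator if (i) it preserves all graded
Betti numbers of finitely generated strongly stable ideals and (ii) it preserves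
inclusions of finitely generated strongly stable ideals. -/
structure IsStableOperator (σ : Mon → Mon) : Prop where
  betti_eq : ∀ I : Ideal (MvPolynomial ℕ K), IsFGStronglyStable K I →
    ∀ i j, betti K I i j = betti K (sigmaIdeal K σ I) i j
  incl : ∀ J I : Ideal (MvPolynomial ℕ K), IsFGStronglyStable K J →
    IsFGStronglyStable K I → J ≤ I → sigmaIdeal K σ J ≤ sigmaIdeal K σ I

/-- A map `σ : M_[∞] → M_[∞]` is a squarefree stable operator if (i) it sends
finitely generated squarefree strongly stable ideals to squarefree monomial
ideals with the same graded Betti numbers and (ii) it preserves inclusions of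
finitely generated squarefree strongly stable ideals. -/
structure IsSqfStableOperator (σ : Mon → Mon) : Prop where
  sqfree : ∀ I : Ideal (MvPolynomial ℕ K), IsFGSqfStronglyStable K I →
    ∀ u ∈ GSet K I, sqfreeMon (σ u)
  betti_eq : ∀ I : Ideal (MvPolynomial ℕ K), IsFGSqfStronglyStable K I →
    ∀ i j, betti K I i j = betti K (sigmaIdeal K σ I) i j
  incl : ∀ J I : Ideal (MvPolynomial ℕ K), IsFGSqfStronglyStable K J →
    IsFGSqfStronglyStable K I → J ≤ I → sigmaIdeal K σ J ≤ sigmaIdeal K σ I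

/-! ### Generic initial ideals with respect to the degree reverse
lexicographic order. -/

/-- `u` is the initial (leading) monomial of the polynomial `f` w.r.t. degrevlex. -/
def IsLeadMon (f : MvPolynomial ℕ K) (u : Mon) : Prop :=
  u ∈ f.support ∧ ∀ v ∈ f.support, v ≠ u → degrevlexLT v u

/-- The initial ideal of `I` w.r.t. the degree reverse lexicographic order. -/
def inIdeal (I : Ideal (MvPolynomial ℕ K)) : Ideal (MvPolynomial ℕ K) :=
  Ideal.span {p | ∃ f ∈ I, ∃ u, IsLeadMon K f u ∧ p = mono K u}

/-- The action of a matrix `φ ∈ GL_n(K)` on polynomials,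
`x_j ↦ ∑_i φ_{ij} x_i` for `1 ≤ j ≤ n`. -/
def gAct (n : ℕ) (φ : Matrix (Fin n) (Fin n) K) :
    MvPolynomial ℕ K →ₐ[K] MvPolynomial ℕ K :=
  MvPolynomial.aeval fun j =>
    if h : 1 ≤ j ∧ j ≤ n then
      ∑ i : Fin n, MvPolynomial.C (φ i ⟨j - 1, by omega⟩) * MvPolynomial.X ((i : ℕ) + 1)
    else MvPolynomial.X j

/-- Evaluation of a polynomial in the `n × n` matrix entries at a matrix. -/
def evalMat (n : ℕ) (φ : Matrix (Fin n) (Fin n) K)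
    (P : MvPolynomial (Fin n × Fin n) K) : K :=
  MvPolynomial.eval (fun p => φ p.1 p.2) P

/-- `J` is the generic initial ideal of `I` (w.r.t. degrevlex and the action of
`GL_n(K)` on `x₁,…,x_n`): there is a nonempty Zariski open subset of `GL_n(K)`
on which `in(φ(I))` is constantly equal to `J`. -/
def GinSpec (n : ℕ) (I J : Ideal (MvPolynomial ℕ K)) : Prop :=
  ∃ P : MvPolynomial (Fin n × Fin n) K, P ≠ 0 ∧
    (∃ φ : Matrix (Fin n) (Fin n) K, IsUnit φ.det ∧ evalMat K n φ P ≠ 0) ∧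
    ∀ φ : Matrix (Fin n) (Fin n) K, IsUnit φ.det → evalMat K n φ P ≠ 0 →
      inIdeal K (Ideal.map (gAct K n φ) I) = J

/-- The generic initial ideal `gin(I)` w.r.t. the degree reverse lexicographic
order (and coordinate changes of `x₁,…,x_n`). -/
def gin (n : ℕ) (I : Ideal (MvPolynomial ℕ K)) : Ideal (MvPolynomial ℕ K) :=
  if h : ∃ J, GinSpec K n I J then h.choose else ⊥

/-- `gin(I)` for a finitely generated ideal of `S_[∞]`, computed in
`S_[max(I)]` as in the convention `gin(I) = gin(I ∩ S_[max(I)]) S_[∞]`. -/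
def ginInf (I : Ideal (MvPolynomial ℕ K)) : Ideal (MvPolynomial ℕ K) :=
  gin K (maxIdx K I) I

/-! ### Simplicial complexes on `[n]`, Stanley-Reisner ideals, `f`-, `h`- and
`g`-vectors, Cohen-Macaulay and Gorenstein* complexes. -/

/-- `Γ` is a simplicial complex on the vertex set `[n] = {1,…,n}`. -/
def IsComplexOn (n : ℕ) (Γ : Finset (Finset ℕ)) : Prop :=
  (∀ S ∈ Γ, S ⊆ Finset.Icc 1 n) ∧ (∀ S ∈ Γ, ∀ T ⊆ S, T ∈ Γ) ∧
    (∀ i ∈ Finset.Icc 1 n, ({i} : Finset ℕ) ∈ Γ)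

/-- `Γ` is `(d-1)`-dimensional (all faces have at most `d` vertices, some face
has exactly `d` vertices). -/
def IsDimensional (Γ : Finset (Finset ℕ)) (d : ℕ) : Prop :=
  (∀ S ∈ Γ, S.card ≤ d) ∧ ∃ S ∈ Γ, S.card = d

/-- The Stanley-Reisner ideal `I_Γ ⊂ S_[n]` of a simplicial complex on `[n]`. -/
def SRideal (n : ℕ) (Γ : Finset (Finset ℕ)) : Ideal (MvPolynomial ℕ K) :=
  Ideal.span {p | ∃ S : Finset ℕ, S ⊆ Finset.Icc 1 n ∧ S ∉ Γ ∧ p = mono K (sqf S)}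

/-- `fvec Γ i = f_{i-1}(Γ)`, the number of faces of `Γ` with `i` vertices. -/
def fvec (Γ : Finset (Finset ℕ)) (i : ℕ) : ℕ := (Γ.filter fun S => S.card = i).card

/-- The `h`-vector of a `(d-1)`-dimensional complex:
`h_i = ∑_{j=0}^{i} (-1)^{i-j} C(d-j, d-i) f_{j-1}`. -/
def hvec (Γ : Finset (Finset ℕ)) (d i : ℕ) : ℤ :=
  ∑ j ∈ Finset.range (i + 1),
    (-1 : ℤ) ^ (i - j) * (Nat.choose (d - j) (d - i) : ℤ) * (fvec Γ j : ℤ)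

/-- The `g`-vector: `g₀ = 1` and `g_i = h_i - h_{i-1}`. -/
def gvec (Γ : Finset (Finset ℕ)) (d i : ℕ) : ℤ :=
  if i = 0 then 1 else hvec Γ d i - hvec Γ d (i - 1)

/-- The link of a face `S` in `Γ`. -/
def linkOf (Γ : Finset (Finset ℕ)) (S : Finset ℕ) : Finset (Finset ℕ) :=
  Γ.filter fun T => Disjoint S T ∧ S ∪ T ∈ Γ

/-- `Γ` is Cohen-Macaulay over `K` (Reisner's criterion: for every face `S` and
every `i` below the dimension of the link of `S`, `H̃_{i-1}(link S; K) = 0`). -/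
def IsCM (Γ : Finset (Finset ℕ)) : Prop :=
  ∀ S ∈ Γ, ∀ i < (linkOf Γ S).sup Finset.card, redH K (linkOf Γ S) i = 0

/-- `Γ` is a `(d-1)`-dimensional Gorenstein* complex over `K` (the standard
characterization: every link has the reduced homology of a sphere of the
appropriate dimension). -/
def IsGorensteinStar (d : ℕ) (Γ : Finset (Finset ℕ)) : Prop :=
  IsDimensional Γ d ∧
    ∀ S ∈ Γ, ∀ i, redH K (linkOf Γ S) i = if i = d - S.card then 1 else 0

/-! ### The monomial sets `L(Γ)` and `U(Γ)`. -/

/-- `L_i(Γ)`: degree-`i` monomials of `S_[n-d]` not belonging to `gin(I_Γ)`. -/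
def Lset (n d : ℕ) (Γ : Finset (Finset ℕ)) (i : ℕ) : Set Mon :=
  {u | (∀ j ∈ u.support, 1 ≤ j ∧ j ≤ n - d) ∧ degMon u = i ∧
    ¬ memMon K (gin K n (SRideal K n Γ)) u}

/-- `L(Γ)`: monomials of `S_[n-d]` not belonging to `gin(I_Γ)`. -/
def LsetAll (n d : ℕ) (Γ : Finset (Finset ℕ)) : Set Mon :=
  {u | (∀ j ∈ u.support, 1 ≤ j ∧ j ≤ n - d) ∧ ¬ memMon K (gin K n (SRideal K n Γ)) u}

/-- `U(Γ)`: monomials of `S_[n-d-1]` not belonging to `gin(I_Γ)`. -/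
def Uset (n d : ℕ) (Γ : Finset (Finset ℕ)) : Set Mon :=
  {u | (∀ j ∈ u.support, 1 ≤ j ∧ j ≤ n - d - 1) ∧
    ¬ memMon K (gin K n (SRideal K n Γ)) u}

/-- `U_i(Γ)`: degree-`i` monomials of `S_[n-d-1]` not belonging to `gin(I_Γ)`. -/
def UsetDeg (n d : ℕ) (Γ : Finset (Finset ℕ)) (i : ℕ) : Set Mon :=
  {u ∈ Uset K n d Γ | degMon u = i}

/-! ### Lefschetz properties. -/

/-- The ideal generated by the variables outside `{x₁,…,x_n}`. -/
def outsideIdeal (n : ℕ) : Ideal (MvPolynomial ℕ K) :=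
  Ideal.span {p | ∃ j : ℕ, (j = 0 ∨ n < j) ∧ p = MvPolynomial.X j}

/-- A linear form in the variables `x₁,…,x_n`. -/
def IsLinForm (n : ℕ) (f : MvPolynomial ℕ K) : Prop :=
  f ∈ MvPolynomial.homogeneousSubmodule ℕ K 1 ∧ f.vars ⊆ Finset.Icc 1 n

/-- The `i`-th homogeneous component of the quotient by `J`, as a `K`-submodule. -/
def grPiece (J : Ideal (MvPolynomial ℕ K)) (i : ℕ) :
    Submodule K (MvPolynomial ℕ K ⧸ J) :=
  Submodule.map (Ideal.Quotient.mkₐ K J).toLinearMap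
    (MvPolynomial.homogeneousSubmodule ℕ K i)

/-- The ideal `I_Γ + (θ₁,…,θ_d)` inside `S_[n]`, realized in `S_[∞]` by also
killing the variables outside `{x₁,…,x_n}`. -/
def fullIdeal (n d : ℕ) (Γ : Finset (Finset ℕ)) (θ : Fin d → MvPolynomial ℕ K) :
    Ideal (MvPolynomial ℕ K) :=
  SRideal K n Γ ⊔ Ideal.span (Set.range θ) ⊔ outsideIdeal K n

/-- `θ₁,…,θ_d` is a system of parameters of `S_[n]/I_Γ` consisting of linear
forms (for a `(d-1)`-dimensional complex: the quotient by them is Artinian,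
i.e. a finite dimensional `K`-vector space). -/
def IsLinearSOP (n d : ℕ) (Γ : Finset (Finset ℕ)) (θ : Fin d → MvPolynomial ℕ K) : Prop :=
  (∀ k, IsLinForm K n (θ k)) ∧ Module.Finite K (MvPolynomial ℕ K ⧸ fullIdeal K n d Γ θ)

/-- Multiplication by (the class of) `f` is injective from the `i`-th to the
`i'`-th homogeneous component of the quotient by `J`. -/
def mulInjOn (J : Ideal (MvPolynomial ℕ K)) (f : MvPolynomial ℕ K) (i i' : ℕ) : Prop :=
  ∀ a b : MvPolynomial ℕ K ⧸ J, a ∈ grPiece K J i → b ∈ grPiece K J i →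
    Ideal.Quotient.mk J f * a = Ideal.Quotient.mk J f * b → a = b

/-- Multiplication by (the class of) `f` maps the `i`-th homogeneous component
of the quotient by `J` onto the `i'`-th one. -/
def mulSurjOnto (J : Ideal (MvPolynomial ℕ K)) (f : MvPolynomial ℕ K) (i i' : ℕ) : Prop :=
  ∀ c ∈ grPiece K J i', ∃ a ∈ grPiece K J i, Ideal.Quotient.mk J f * a = c

/-- The weak Lefschetz property of a `(d-1)`-dimensional (Gorenstein*)
complex `Γ` on `[n]`. -/
def HasWLP (n d : ℕ) (Γ : Finset (Finset ℕ)) : Prop :=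
  ∃ (θ : Fin d → MvPolynomial ℕ K) (ω : MvPolynomial ℕ K),
    IsLinearSOP K n d Γ θ ∧ IsLinForm K n ω ∧
    (∀ i, 1 ≤ i → i ≤ d / 2 → mulInjOn K (fullIdeal K n d Γ θ) ω (i - 1) i) ∧
    (∀ i, d / 2 < i → mulSurjOnto K (fullIdeal K n d Γ θ) ω (i - 1) i)

/-- The strong Lefschetz property of a `(d-1)`-dimensional (Gorenstein*)
complex `Γ` on `[n]`. -/
def HasSLP (n d : ℕ) (Γ : Finset (Finset ℕ)) : Prop :=
  ∃ (θ : Fin d → MvPolynomial ℕ K) (ω : MvPolynomial ℕ K),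
    IsLinearSOP K n d Γ θ ∧ IsLinForm K n ω ∧
    ∀ i ≤ d / 2,
      mulInjOn K (fullIdeal K n d Γ θ) (ω ^ (d - 2 * i)) i (d - i) ∧
      mulSurjOnto K (fullIdeal K n d Γ θ) (ω ^ (d - 2 * i)) i (d - i)

/-! ### Shifted order ideals of monomials, squeezed balls and squeezed spheres. -/

/-- `U` is a shifted order ideal of monomials of `S_[m]`:
it contains `1, x₁,…,x_m`, consists of monomials in `x₁,…,x_m`, is closed
under taking divisors, and is closed under `u ∈ U`, `u ≼ v` ⟹ `v ∈ U`. -/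
def IsShiftedOrderIdeal (m : ℕ) (U : Finset Mon) : Prop :=
  ((0 : Mon) ∈ U) ∧ (∀ i, 1 ≤ i → i ≤ m → (Finsupp.single i 1 : Mon) ∈ U) ∧
  (∀ u ∈ U, ∀ j ∈ (u : Mon).support, 1 ≤ j ∧ j ≤ m) ∧
  (∀ u ∈ U, ∀ v : Mon, v ≤ u → v ∈ U) ∧
  (∀ u ∈ U, ∀ v : Mon, prec u v → (∀ j ∈ v.support, 1 ≤ j ∧ j ≤ m) → v ∈ U)

/-- `I(U) ⊂ S_[∞]`: the ideal generated by all monomials of `S_[m]` not in `U`. -/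
def IU (m : ℕ) (U : Finset Mon) : Ideal (MvPolynomial ℕ K) :=
  Ideal.span {p | ∃ u : Mon, (∀ j ∈ u.support, 1 ≤ j ∧ j ≤ m) ∧ u ∉ U ∧ p = mono K u}

/-- The facet `F_d(u) ⊂ [n]` associated with a monomial `u = x_{i₁}⋯x_{i_k}`,
`i₁ ≤ ⋯ ≤ i_k`:
`F_d(u) = {i₁, i₁+1} ∪ {i₂+2, i₂+3} ∪ ⋯ ∪ {i_k+2(k-1), i_k+2k-1} ∪ {n+2k-d,…,n}`. -/
def Fface (n d : ℕ) (u : Mon) : Finset ℕ :=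
  ((Finset.range (degMon u)).biUnion fun j =>
      {(sortedIdx u).getD j 0 + 2 * j, (sortedIdx u).getD j 0 + 2 * j + 1}) ∪
    Finset.Icc (n + 2 * degMon u - d) n

/-- The squeezed `d`-ball `B_d(U)`: the simplicial complex on `[n]` generated by
`{F_d(u) : u ∈ U}`. -/
def squeezedBall (n d : ℕ) (U : Finset Mon) : Finset (Finset ℕ) :=
  U.biUnion fun u => (Fface n d u).powerset

/-- The squeezed `(d-1)`-sphere `S_d(U) = ∂B_d(U)`: the subcomplex of `B_d(U)`
generated by the `d`-element faces lying in exactly one facet. -/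
def squeezedSphere (n d : ℕ) (U : Finset Mon) : Finset (Finset ℕ) :=
  ((squeezedBall n d U).filter fun G => G.card = d ∧
      ((U.image fun u => Fface n d u).filter fun F => G ⊆ F).card = 1).biUnion
    Finset.powerset

end SqueezedSpheres

/-! ### Linear quotients auxiliary data. -/

namespace SqueezedSpheres
open scoped Classical
noncomputable section

/-- For `u = x_{i₁}⋯x_{i_d}` with `i₁ ≤ ⋯ ≤ i_d`: `iIdx u l = i_l`, with the
convention `i₀ = 1`. -/
def iIdx (u : Mon) (l : ℕ) : ℕ := if l = 0 then 1 else (sortedIdx u).getD (l - 1) 0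

/-- The set `⋃_{l=0}^{d-1} {k : i_l + a_l ≤ k < i_{l+1} + a_l}` (where `i₀ = 1`
and `a₀ = 0`). -/
def ASet (a : ℕ → ℕ) (u : Mon) : Set ℕ :=
  {k | ∃ l < degMon u, iIdx u l + a l ≤ k ∧ k < iIdx u (l + 1) + a l}

/-! ### Polytopal spheres. -/

/-- `S` is the vertex set of a proper (exposed) face of the polytope with
vertices `v i`, `i ∈ [n]`. -/
def IsProperFaceSet (n d : ℕ) (v : ℕ → (Fin d → ℝ)) (S : Finset ℕ) : Prop :=
  ∃ (ℓ : (Fin d → ℝ) →ₗ[ℝ] ℝ) (c : ℝ),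
    (∀ i ∈ Finset.Icc 1 n, ℓ (v i) ≤ c) ∧
    (∀ i ∈ Finset.Icc 1 n, (ℓ (v i) = c ↔ i ∈ S)) ∧
    (∃ i ∈ Finset.Icc 1 n, ℓ (v i) < c)

/-- `Γ` is (isomorphic to) the boundary complex of a simplicial `d`-polytope
with `n` vertices: there is an injective placement `v` of the vertices `[n]` in
`ℝ^d` spanning affinely, each `v i` a vertex (extreme point) of the convex hull,
every proper face a simplex, such that the nonempty faces of `Γ` are exactly
the vertex sets of proper faces of the polytope. -/
def IsPolytopalSphere (n d : ℕ) (Γ : Finset (Finset ℕ)) : Prop :=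
  ∃ v : ℕ → (Fin d → ℝ),
    Set.InjOn v ↑(Finset.Icc 1 n) ∧
    affineSpan ℝ (v '' ↑(Finset.Icc 1 n)) = ⊤ ∧
    (∀ i ∈ Finset.Icc 1 n, v i ∉ convexHull ℝ (v '' ↑((Finset.Icc 1 n).erase i))) ∧
    (∀ S : Finset ℕ, S ⊆ Finset.Icc 1 n → IsProperFaceSet n d v S →
      AffineIndependent ℝ fun i : ↥S => v ↑i) ∧
    (∀ S : Finset ℕ, S.Nonempty →
      (S ∈ Γ ↔ S ⊆ Finset.Icc 1 n ∧ IsProperFaceSet n d v S)) ∧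
    (∅ : Finset ℕ) ∈ Γ

/-! ### Exterior algebraic shifting.

For a generic matrix `g ∈ GL_n(K)` the image of the exterior monomial `e_S` in
the exterior face ring `E/J_Γ` has, in the basis `{e_T : T ∈ Γ}`, coordinates
`± det g[T,S]`; `S` is a face of the exterior algebraic shifted complex
`Δ^e(Γ)` (defined by `J_{Δ^e(Γ)} = Gin(J_Γ)` w.r.t. degrevlex) if and only if
this image does not lie in the span of the images of the `e_T` with
`T <_drl S`. -/

variable (K : Type) [Field K]

/-- Matrix entry `g_{st}` for `1`-based indices `s, t ∈ [n]`. -/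
def gEnt (n : ℕ) (g : Matrix (Fin n) (Fin n) K) (s t : ℕ) : K :=
  if hs : s - 1 < n then if ht : t - 1 < n then g ⟨s - 1, hs⟩ ⟨t - 1, ht⟩ else 0 else 0

/-- The minor `det g[T, S]` of rows `T` and columns `S` (two subsets of `[n]` of
equal cardinality, taken in increasing order). -/
def subDet (n : ℕ) (g : Matrix (Fin n) (Fin n) K) (T S : Finset ℕ) : K :=
  if h : T.card = S.card then
    Matrix.det (Matrix.of fun a b : Fin S.card =>
      gEnt K n g (T.orderEmbOfFin h a) (S.orderEmbOfFin rfl b))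
  else 0

/-- The coordinate vector (in the basis of faces of `Γ`) of the image of the
generic exterior monomial `e_S` in the exterior face ring of `Γ`. -/
def lamVec (n : ℕ) (Γ : Finset (Finset ℕ)) (g : Matrix (Fin n) (Fin n) K)
    (S : Finset ℕ) : Finset ℕ → K :=
  fun T => if T ∈ Γ ∧ T.card = S.card then subDet K n g T S else 0

/-- Degrevlex on squarefree monomials: `S <_drl T` (for `|S| = |T|`) iff the
largest element of the symmetric difference belongs to `S`. -/
def drlSetLT (S T : Finset ℕ) : Prop :=
  ∃ r ∈ S, r ∉ T ∧ ∀ t, r < t → (t ∈ S ↔ t ∈ T)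

/-- `Δ` is the exterior algebraic shifted complex `Δ^e(Γ)` (i.e.
`J_Δ = Gin(J_Γ)`, the generic initial ideal of the exterior face ideal of `Γ`
w.r.t. degrevlex): for every matrix `g` in a nonempty Zariski open subset of
`GL_n(K)`, a subset `S ⊆ [n]` is a face of `Δ` iff the image of the generic
exterior monomial `e_S` in the exterior face ring of `Γ` does not lie in the
span of the images of the `e_T` with `T <_drl S`. -/
def DeltaESpec (n : ℕ) (Γ Δ : Finset (Finset ℕ)) : Prop :=
  ∃ P : MvPolynomial (Fin n × Fin n) K, P ≠ 0 ∧
    (∃ g : Matrix (Fin n) (Fin n) K, IsUnit g.det ∧ evalMat K n g P ≠ 0) ∧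
    ∀ g : Matrix (Fin n) (Fin n) K, IsUnit g.det → evalMat K n g P ≠ 0 →
      ∀ S : Finset ℕ, S ∈ Δ ↔ S ⊆ Finset.Icc 1 n ∧
        lamVec K n Γ g S ∉ Submodule.span K
          {w | ∃ T : Finset ℕ, T ⊆ Finset.Icc 1 n ∧ T.card = S.card ∧
            drlSetLT T S ∧ w = lamVec K n Γ g T}

/-- The exterior algebraic shifted complex `Δ^e(Γ)` of a complex on `[n]`. -/
def deltaE (n : ℕ) (Γ : Finset (Finset ℕ)) : Finset (Finset ℕ) :=
  if h : ∃ Δ, DeltaESpec K n Γ Δ then h.choose else ∅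

/-- The complex `σ(Γ)` on `[n]` defined by `I_{σ(Γ)} = σ(I_Γ S_[∞]) ∩ S_[n]`. -/
def sigmaCplx (n : ℕ) (σ : Mon → Mon) (Γ : Finset (Finset ℕ)) : Finset (Finset ℕ) :=
  (Finset.Icc 1 n).powerset.filter fun S =>
    ¬ memMon K (sigmaIdeal K σ (SRideal K n Γ)) (sqf S)

/-! ### Squeezing. -/

/-- `U(Γ)` as a finite set of monomials. -/
def UFin (n d : ℕ) (Γ : Finset (Finset ℕ)) : Finset Mon :=
  if h : (Uset K n d Γ).Finite then h.toFinset else ∅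

/-- The squeezing operation `Sq(Γ) = S_d(U(Γ))`. -/
def SqCplx (n d : ℕ) (Γ : Finset (Finset ℕ)) : Finset (Finset ℕ) :=
  squeezedSphere n d (UFin K n d Γ)

/-- The face `{i₁, i₂+1, …, i_k+k-1} ∪ {n-k+1,…,n}` associated with a monomial
`u = x_{i₁}⋯x_{i_k}`, `i₁ ≤ ⋯ ≤ i_k`. -/
def Lface (n : ℕ) (u : Mon) : Finset ℕ :=
  ((Finset.range (degMon u)).image fun j => (sortedIdx u).getD j 0 + j) ∪
    Finset.Icc (n - degMon u + 1) n

end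
end SqueezedSpheres

namespace SqueezedSpheres
open scoped Classical

/-! ### The combinatorics of squeezed balls -/

/-- The sequence `i₁, i₂, …, i_k, n - d, n - d, …` of a monomial `u = x_{i₁}⋯x_{i_k}`, indexed
from `0`.  Padding with `n - d = m + 1` turns the tail of the facet `F_d(u)` into further pairs
`{i_j + 2j, i_j + 2j + 1}`. -/
noncomputable def padSeq (n d : ℕ) (u : Mon) (j : ℕ) : ℕ := (sortedIdx u).getD j (n - d)

/-- The restriction set `R(u) = {i₁, i₂ + 2, …, i_k + 2(k-1)}` of the facet `F_d(u)`: the left end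
points of its pairs. -/
noncomputable def restr (n d : ℕ) (u : Mon) : Finset ℕ :=
  (Finset.range (degMon u)).image fun j => padSeq n d u j + 2 * j

/-- The rank of `u` by which the facets are ordered; the shelling adds facets in the order of
decreasing rank. -/
noncomputable def rk (n d : ℕ) (u : Mon) : ℕ := ∑ j ∈ Finset.range d, padSeq n d u j

lemma length_sortedIdx (u : Mon) : (sortedIdx u).length = degMon u := by
  rw [sortedIdx, Multiset.length_sort, Finsupp.card_toMultiset]; rfl

lemma sortedIdx_mono (u : Mon) {i j : ℕ} (hij : i ≤ j) (hj : j < (sortedIdx u).length) :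
    (sortedIdx u)[i] ≤ (sortedIdx u)[j] := by
  have h : (sortedIdx u).Pairwise (· ≤ ·) := Multiset.pairwise_sort _ _
  rcases hij.eq_or_lt with rfl | h'
  · exact le_rfl
  · exact List.pairwise_iff_getElem.1 h i j (by omega) hj h'

lemma sortedIdx_inj {u v : Mon} (h : sortedIdx u = sortedIdx v) : u = v := by
  have h' : Finsupp.toMultiset u = Finsupp.toMultiset v := by
    rw [← Multiset.sort_eq (Finsupp.toMultiset u) (· ≤ ·),
      ← Multiset.sort_eq (Finsupp.toMultiset v) (· ≤ ·)]
    exact congrArg _ h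
  rw [← Finsupp.toMultiset_toFinsupp u, h', Finsupp.toMultiset_toFinsupp]

lemma sortedIdx_toFinsupp {l : List ℕ} (h : l.Pairwise (· ≤ ·)) :
    sortedIdx (Multiset.toFinsupp (l : Multiset ℕ)) = l := by
  rw [sortedIdx, Multiset.toFinsupp_toMultiset]
  exact List.Perm.eq_of_pairwise' (Multiset.pairwise_sort _ _) h
    (Multiset.coe_eq_coe.1 (Multiset.sort_eq _ _))

lemma mem_sortedIdx {u : Mon} {i : ℕ} : i ∈ sortedIdx u ↔ i ∈ u.support := by
  rw [sortedIdx, Multiset.mem_sort, Finsupp.mem_toMultiset]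

section comb
variable {n d : ℕ} {U : Finset Mon}

lemma padSeq_of_lt {u : Mon} {j : ℕ} (h : j < (sortedIdx u).length) :
    padSeq n d u j = (sortedIdx u)[j] := List.getD_eq_getElem _ _ h

lemma padSeq_of_ge {u : Mon} {j : ℕ} (h : degMon u ≤ j) : padSeq n d u j = n - d :=
  List.getD_eq_default _ _ (by rw [length_sortedIdx]; exact h)

lemma padSeq_lt (hn : d < n) (hU : IsShiftedOrderIdeal (n - d - 1) U) {u : Mon} (hu : u ∈ U)
    {j : ℕ} (h : j < degMon u) : 1 ≤ padSeq n d u j ∧ padSeq n d u j < n - d := by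
  rw [← length_sortedIdx] at h
  rw [padSeq_of_lt h]
  have := hU.2.2.1 u hu _ (mem_sortedIdx.1 (List.getElem_mem h))
  omega

lemma padSeq_le (hn : d < n) (hU : IsShiftedOrderIdeal (n - d - 1) U) {u : Mon} (hu : u ∈ U)
    (j : ℕ) : 1 ≤ padSeq n d u j ∧ padSeq n d u j ≤ n - d := by
  rcases lt_or_ge j (degMon u) with h | h
  · have := padSeq_lt hn hU hu h; omega
  · rw [padSeq_of_ge h]; omega

lemma padSeq_mono (hn : d < n) (hU : IsShiftedOrderIdeal (n - d - 1) U) {u : Mon} (hu : u ∈ U) :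
    Monotone (padSeq n d u) := by
  intro i j hij
  rcases lt_or_ge j (degMon u) with h | h
  · rw [← length_sortedIdx] at h
    rw [padSeq_of_lt h, padSeq_of_lt (hij.trans_lt h)]
    exact sortedIdx_mono u hij h
  · rw [padSeq_of_ge h]; exact (padSeq_le hn hU hu i).2

lemma padSeq_inj (hn : d < n) (hU : IsShiftedOrderIdeal (n - d - 1) U) {u v : Mon} (hu : u ∈ U)
    (hv : v ∈ U) (h : padSeq n d u = padSeq n d v) : u = v := by
  have key : ∀ {u v : Mon}, u ∈ U → v ∈ U → padSeq n d u = padSeq n d v →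
      degMon u ≤ degMon v := by
    intro u v hu hv h
    by_contra! hlt
    have h1 := padSeq_lt hn hU hu hlt
    rw [h, padSeq_of_ge le_rfl] at h1
    omega
  have hl : degMon u = degMon v := le_antisymm (key hu hv h) (key hv hu h.symm)
  apply sortedIdx_inj
  apply List.ext_getElem (by simp [length_sortedIdx, hl])
  intro i h1 h2
  rw [← padSeq_of_lt (n := n) (d := d) h1, ← padSeq_of_lt (n := n) (d := d) h2, h]

/-- Shiftedness of `U` in terms of padded sequences: increasing entries (where reaching `n - d`
means dropping a variable) does not leave `U`. -/
lemma exists_of_padSeq_le (hn : d < n) (hU : IsShiftedOrderIdeal (n - d - 1) U) {u : Mon}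
    (hu : u ∈ U) {t : ℕ → ℕ} (ht : Monotone t) (hle : ∀ j, padSeq n d u j ≤ t j)
    (htn : ∀ j, t j ≤ n - d) : ∃ v ∈ U, padSeq n d v = t := by
  have hk : ∃ k, t k = n - d :=
    ⟨degMon u, le_antisymm (htn _) ((padSeq_of_ge (n := n) (d := d) le_rfl).symm.le.trans (hle _))⟩
  set k := Nat.find hk with hkdef
  have hkt : t k = n - d := Nat.find_spec hk
  have hku : k ≤ degMon u := Nat.find_min' hk
    (le_antisymm (htn _) ((padSeq_of_ge (n := n) (d := d) le_rfl).symm.le.trans (hle _)))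
  have hlt : ∀ j < k, t j < n - d := fun j hj =>
    lt_of_le_of_ne (htn j) (Nat.find_min hk hj)
  set l : List ℕ := (List.range k).map t with hl
  have hlp : l.Pairwise (· ≤ ·) := by
    rw [hl, List.pairwise_map]
    exact List.pairwise_lt_range.imp fun h => ht h.le
  set l' : List ℕ := (sortedIdx u).take k with hl'
  have hlp' : l'.Pairwise (· ≤ ·) :=
    List.Pairwise.sublist (List.take_sublist _ _) (Multiset.pairwise_sort _ _)
  have hllen : l.length = k := by simp [hl]
  have hllen' : l'.length = k := by simp [hl', length_sortedIdx, hku]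
  have hu' : Multiset.toFinsupp (l' : Multiset ℕ) ∈ U := by
    refine hU.2.2.2.1 u hu _ ?_
    have h1 : (l' : Multiset ℕ) ≤ Finsupp.toMultiset u := by
      rw [← Multiset.sort_eq (Finsupp.toMultiset u) (· ≤ ·)]
      exact Multiset.coe_le.2 (List.take_sublist _ _).subperm
    have h2 := Multiset.toFinsupp_strictMono.monotone h1
    rwa [Finsupp.toMultiset_toFinsupp] at h2
  have hs := sortedIdx_toFinsupp hlp
  refine ⟨Multiset.toFinsupp (l : Multiset ℕ), hU.2.2.2.2 _ hu' _ ?_ ?_, ?_⟩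
  · rw [prec, hs, sortedIdx_toFinsupp hlp', List.forall₂_iff_get]
    refine ⟨by omega, fun i h1 h2 => ?_⟩
    have h3 : i < (sortedIdx u).length := by rw [length_sortedIdx]; omega
    have := hle i
    rw [padSeq_of_lt h3] at this
    simpa [hl, hl'] using this
  · intro j hj
    rw [← mem_sortedIdx, hs, hl, List.mem_map] at hj
    obtain ⟨i, hi, rfl⟩ := hj
    have h1 := hlt i (List.mem_range.1 hi)
    have h2 := hle i
    have h3 := padSeq_le hn hU hu i
    omega
  · funext j
    rw [padSeq, hs]
    rcases lt_or_ge j k with h | h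
    · rw [List.getD_eq_getElem _ _ (by omega)]; simp [hl]
    · rw [List.getD_eq_default _ _ (by omega)]
      exact le_antisymm (hkt ▸ ht h) (htn j)

lemma Fface_eq (hn : d < n) (hdeg : ∀ u ∈ U, degMon u ≤ d / 2) {u : Mon} (hu : u ∈ U) :
    Fface n d u = (Finset.range (d + 1)).image fun q => padSeq n d u (q / 2) + q := by
  have hk := hdeg u hu
  have hget : ∀ j < degMon u, (sortedIdx u).getD j 0 = padSeq n d u j := by
    intro j hj
    rw [← length_sortedIdx] at hj
    rw [padSeq_of_lt hj, List.getD_eq_getElem _ _ hj]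
  ext x
  simp only [Fface, Finset.mem_union, Finset.mem_biUnion, Finset.mem_range, Finset.mem_insert,
    Finset.mem_singleton, Finset.mem_Icc, Finset.mem_image]
  constructor
  · rintro (⟨j, hj, h⟩ | h)
    · rw [hget j hj] at h
      rcases h with h | h
      · refine ⟨2 * j, by omega, ?_⟩
        rw [h, show 2 * j / 2 = j by omega]
      · refine ⟨2 * j + 1, by omega, ?_⟩
        rw [h, show (2 * j + 1) / 2 = j by omega, add_assoc]
    · refine ⟨x - (n - d), by omega, ?_⟩
      rw [padSeq_of_ge (by omega)]
      omega
  · rintro ⟨q, hq, rfl⟩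
    rcases lt_or_ge (q / 2) (degMon u) with h | h
    · left
      refine ⟨q / 2, h, ?_⟩
      rw [hget _ h]
      omega
    · right
      rw [padSeq_of_ge h]
      omega

lemma pairs_strictMono (hn : d < n) (hU : IsShiftedOrderIdeal (n - d - 1) U) {u : Mon}
    (hu : u ∈ U) : StrictMono fun q => padSeq n d u (q / 2) + q := by
  intro a b hab
  have := padSeq_mono hn hU hu (show a / 2 ≤ b / 2 by omega)
  simp only
  omega

lemma card_Fface (hn : d < n) (hU : IsShiftedOrderIdeal (n - d - 1) U)
    (hdeg : ∀ u ∈ U, degMon u ≤ d / 2) {u : Mon} (hu : u ∈ U) : (Fface n d u).card = d + 1 := by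
  rw [Fface_eq hn hdeg hu, Finset.card_image_of_injective _ (pairs_strictMono hn hU hu).injective,
    Finset.card_range]

lemma Fface_subset (hn : d < n) (hU : IsShiftedOrderIdeal (n - d - 1) U)
    (hdeg : ∀ u ∈ U, degMon u ≤ d / 2) {u : Mon} (hu : u ∈ U) :
    Fface n d u ⊆ Finset.Icc 1 n := by
  rw [Fface_eq hn hdeg hu]
  intro x hx
  simp only [Finset.mem_image, Finset.mem_range] at hx
  obtain ⟨q, hq, rfl⟩ := hx
  have := padSeq_le hn hU hu (q / 2)
  simp only [Finset.mem_Icc]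
  omega

lemma card_restr (hn : d < n) (hU : IsShiftedOrderIdeal (n - d - 1) U) {u : Mon} (hu : u ∈ U) :
    (restr n d u).card = degMon u := by
  rw [restr, Finset.card_image_of_injective, Finset.card_range]
  refine StrictMono.injective fun a b hab => ?_
  have := padSeq_mono hn hU hu hab.le
  omega

lemma restr_subset (hn : d < n) (hdeg : ∀ u ∈ U, degMon u ≤ d / 2) {u : Mon} (hu : u ∈ U) :
    restr n d u ⊆ Fface n d u := by
  have hk := hdeg u hu
  rw [Fface_eq hn hdeg hu]
  intro x hx
  simp only [restr, Finset.mem_image, Finset.mem_range] at hx ⊢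
  obtain ⟨q, hq, rfl⟩ := hx
  exact ⟨2 * q, by omega, by rw [show 2 * q / 2 = q by omega]⟩

/-- If a left end point `r` of a pair of `F_d(u)` is removed, then what remains lies in another
facet of larger rank: shift to the right, by one step, the block of adjacent pairs which starts
at `r`. -/
lemma exists_rk_lt (hn : d < n) (hU : IsShiftedOrderIdeal (n - d - 1) U)
    (hdeg : ∀ u ∈ U, degMon u ≤ d / 2) {u : Mon} (hu : u ∈ U) {r : ℕ} (hr : r ∈ restr n d u) :
    ∃ v ∈ U, (Fface n d u).erase r ⊆ Fface n d v ∧ rk n d u < rk n d v := by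
  simp only [restr, Finset.mem_image, Finset.mem_range] at hr
  obtain ⟨j, hj, rfl⟩ := hr
  have hm := padSeq_mono hn hU hu
  have hle := padSeq_le hn hU hu
  have hjl := padSeq_lt hn hU hu hj
  set s := padSeq n d u with hs
  set t : ℕ → ℕ := fun q => if q < j then s q else max (s q) (s j + 1) with ht
  have hst : ∀ q, s q ≤ t q := by
    intro q; simp only [ht]; split_ifs
    · exact le_rfl
    · exact le_max_left _ _
  have htm : Monotone t := by
    intro a b hab
    have := hm hab
    simp only [ht]
    split_ifs with h1 h2
    · exact this
    · exact this.trans (le_max_left _ _)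
    · omega
    · exact max_le_max this le_rfl
  obtain ⟨v, hv, hvt⟩ := exists_of_padSeq_le hn hU hu htm hst (by
    intro q; have := hle q; simp only [ht]; split_ifs <;> omega)
  refine ⟨v, hv, ?_, ?_⟩
  · intro x hx
    rw [Finset.mem_erase, Fface_eq hn hdeg hu, Finset.mem_image] at hx
    obtain ⟨hxr, q, hq, rfl⟩ := hx
    rw [Finset.mem_range] at hq
    rw [Fface_eq hn hdeg hv, hvt, Finset.mem_image]
    simp only [Finset.mem_range]
    rw [← hs] at hxr ⊢
    by_cases h1 : q / 2 < j
    · exact ⟨q, hq, by simp only [ht, if_pos h1]⟩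
    by_cases h2 : s j < s (q / 2)
    · exact ⟨q, hq, by simp only [ht, if_neg h1]; omega⟩
    · have h3 := hm (not_lt.1 h1)
      have h4 : q ≠ 2 * j := by
        rintro rfl
        rw [show 2 * j / 2 = j by omega] at hxr
        exact hxr rfl
      refine ⟨q - 1, by omega, ?_⟩
      have h5 := hm (show (q - 1) / 2 ≤ q / 2 by omega)
      simp only [ht]
      rw [if_neg (by omega)]
      omega
  · have hk := hdeg u hu
    rw [rk, rk, hvt]
    refine Finset.sum_lt_sum (fun q _ => hst q) ⟨j, by simp only [Finset.mem_range]; omega, ?_⟩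
    simp only [ht]
    rw [if_neg (lt_irrefl _), ← hs]
    omega

/-- The facets containing `R(u)`, other than `F_d(u)` itself, have smaller rank than `F_d(u)`. -/
lemma eq_or_rk_lt (hn : d < n) (hU : IsShiftedOrderIdeal (n - d - 1) U)
    (hdeg : ∀ u ∈ U, degMon u ≤ d / 2) {u v : Mon} (hu : u ∈ U) (hv : v ∈ U)
    (h : restr n d u ⊆ Fface n d v) : u = v ∨ rk n d v < rk n d u := by
  have hsm := padSeq_mono hn hU hu
  have htm := padSeq_mono hn hU hv
  have hple : ∀ q < degMon u, ∃ p, 2 * q ≤ p ∧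
      padSeq n d u q + 2 * q = padSeq n d v (p / 2) + p := by
    intro q hq
    have hex : ∀ q < degMon u, ∃ p, padSeq n d u q + 2 * q = padSeq n d v (p / 2) + p := by
      intro q hq
      have := h (Finset.mem_image_of_mem _ (Finset.mem_range.2 hq))
      rw [Fface_eq hn hdeg hv, Finset.mem_image] at this
      obtain ⟨p, _, hp⟩ := this
      exact ⟨p, hp.symm⟩
    induction q with
    | zero => obtain ⟨p, hp⟩ := hex 0 hq; exact ⟨p, by omega, hp⟩
    | succ q ih =>
      obtain ⟨p₀, h0, hp₀⟩ := ih (by omega)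
      obtain ⟨p, hp⟩ := hex (q + 1) hq
      refine ⟨p, ?_, hp⟩
      by_contra! hlt
      have h1 := hsm (Nat.le_succ q)
      have h2 := htm (show p / 2 ≤ p₀ / 2 by omega)
      simp only [Nat.succ_eq_add_one] at h1
      omega
  have hle : ∀ q, padSeq n d v q ≤ padSeq n d u q := by
    intro q
    rcases lt_or_ge q (degMon u) with hq | hq
    · obtain ⟨p, h1, h2⟩ := hple q hq
      have := htm (show q ≤ p / 2 by omega)
      omega
    · rw [padSeq_of_ge hq]; exact (padSeq_le hn hU hv q).2
  by_cases hall : ∀ q ∈ Finset.range d, padSeq n d v q = padSeq n d u q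
  · left
    refine padSeq_inj hn hU hu hv (funext fun q => ?_)
    rcases lt_or_ge q d with hq | hq
    · exact (hall q (Finset.mem_range.2 hq)).symm
    · have h1 := hdeg u hu
      have h2 := hdeg v hv
      rw [padSeq_of_ge (by omega), padSeq_of_ge (by omega)]
  · right
    push Not at hall
    obtain ⟨q, hq, hne⟩ := hall
    exact Finset.sum_lt_sum (fun q _ => hle q) ⟨q, hq, lt_of_le_of_ne (hle q) hne⟩

lemma mem_squeezedBall {G : Finset ℕ} :
    G ∈ squeezedBall n d U ↔ ∃ u ∈ U, G ⊆ Fface n d u := by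
  simp [squeezedBall]

/-- Every face of the ball lies in one of the intervals `[R(u), F_d(u)]`. -/
lemma exists_interval (hn : d < n) (hU : IsShiftedOrderIdeal (n - d - 1) U)
    (hdeg : ∀ u ∈ U, degMon u ≤ d / 2) {G : Finset ℕ} (hG : G ∈ squeezedBall n d U) :
    ∃ u ∈ U, restr n d u ⊆ G ∧ G ⊆ Fface n d u := by
  have hne : (U.filter fun u => G ⊆ Fface n d u).Nonempty := by
    obtain ⟨u, hu, h⟩ := mem_squeezedBall.1 hG
    exact ⟨u, Finset.mem_filter.2 ⟨hu, h⟩⟩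
  obtain ⟨u, hu, hmax⟩ := Finset.exists_max_image _ (rk n d) hne
  rw [Finset.mem_filter] at hu
  refine ⟨u, hu.1, fun r hr => ?_, hu.2⟩
  by_contra hrG
  obtain ⟨v, hv, h1, h2⟩ := exists_rk_lt hn hU hdeg hu.1 hr
  have := hmax v (Finset.mem_filter.2 ⟨hv, fun x hx =>
    h1 (Finset.mem_erase.2 ⟨fun e => hrG (e ▸ hx), hu.2 hx⟩)⟩)
  omega

lemma mem_squeezedSphere {G : Finset ℕ} :
    G ∈ squeezedSphere n d U ↔ ∃ H ∈ squeezedBall n d U, H.card = d ∧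
      ((U.image fun u => Fface n d u).filter fun F => H ⊆ F).card = 1 ∧ G ⊆ H := by
  simp [squeezedSphere, and_assoc]

lemma sphere_subset_ball {G : Finset ℕ} (hG : G ∈ squeezedSphere n d U) :
    G ∈ squeezedBall n d U := by
  obtain ⟨H, hH, -, -, hGH⟩ := mem_squeezedSphere.1 hG
  obtain ⟨u, hu, h⟩ := mem_squeezedBall.1 hH
  exact mem_squeezedBall.2 ⟨u, hu, hGH.trans h⟩

lemma card_le_of_mem_sphere {G : Finset ℕ} (hG : G ∈ squeezedSphere n d U) : G.card ≤ d := by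
  obtain ⟨H, -, hH, -, hGH⟩ := mem_squeezedSphere.1 hG
  exact hH ▸ Finset.card_le_card hGH

/-- The ball and its boundary have the same faces with at most `d / 2` vertices: in the facet
`F_d(u)` of least rank containing such a face, some vertex outside both the face and `R(u)` can
be removed to give a ridge that lies in no other facet. -/
lemma mem_sphere_of_card_le (hn : d < n) (hU : IsShiftedOrderIdeal (n - d - 1) U)
    (hdeg : ∀ u ∈ U, degMon u ≤ d / 2) {G : Finset ℕ} (hG : G ∈ squeezedBall n d U)
    (hc : G.card ≤ d / 2) : G ∈ squeezedSphere n d U := by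
  have hne : (U.filter fun u => G ⊆ Fface n d u).Nonempty := by
    obtain ⟨u, hu, h⟩ := mem_squeezedBall.1 hG
    exact ⟨u, Finset.mem_filter.2 ⟨hu, h⟩⟩
  obtain ⟨u, hu, hmin⟩ := Finset.exists_min_image _ (rk n d) hne
  rw [Finset.mem_filter] at hu
  have hcard := card_Fface hn hU hdeg hu.1
  have hk := hdeg u hu.1
  have hR := card_restr hn hU hu.1
  obtain ⟨x, hx, hxn⟩ : ∃ x ∈ Fface n d u, x ∉ G ∪ restr n d u := by
    apply Finset.exists_mem_notMem_of_card_lt_card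
    have := Finset.card_union_le G (restr n d u)
    omega
  rw [Finset.mem_union, not_or] at hxn
  refine mem_squeezedSphere.2 ⟨(Fface n d u).erase x,
    mem_squeezedBall.2 ⟨u, hu.1, Finset.erase_subset _ _⟩, ?_, ?_, ?_⟩
  · rw [Finset.card_erase_of_mem hx, hcard]; rfl
  · rw [Finset.card_eq_one]
    refine ⟨Fface n d u, ?_⟩
    ext F
    simp only [Finset.mem_filter, Finset.mem_image, Finset.mem_singleton]
    constructor
    · rintro ⟨⟨w, hw, rfl⟩, hsub⟩
      have h1 : restr n d u ⊆ Fface n d w := fun y hy => hsub (Finset.mem_erase.2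
        ⟨fun e => hxn.2 (e ▸ hy), restr_subset hn hdeg hu.1 hy⟩)
      rcases eq_or_rk_lt hn hU hdeg hu.1 hw h1 with h | h
      · rw [h]
      · have := hmin w (Finset.mem_filter.2 ⟨hw, fun y hy => hsub (Finset.mem_erase.2
          ⟨fun e => hxn.1 (e ▸ hy), hu.2 hy⟩)⟩)
        omega
    · rintro rfl
      exact ⟨⟨u, hu.1, rfl⟩, Finset.erase_subset _ _⟩
  · exact fun y hy => Finset.mem_erase.2 ⟨fun e => hxn.1 (e ▸ hy), hu.2 hy⟩

end comb

/-! ### Monomials and Stanley–Reisner ideals -/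

section alg
variable {K : Type} [Field K]

lemma degMon_eq_degree (u : Mon) : degMon u = Finsupp.degree u := rfl

lemma degMon_add (u v : Mon) : degMon (u + v) = degMon u + degMon v := by
  simp [degMon_eq_degree]

lemma degMon_single (j : ℕ) : degMon (Finsupp.single j 1) = 1 := by
  simp [degMon_eq_degree]

lemma sqf_apply (S : Finset ℕ) (i : ℕ) : sqf S i = if i ∈ S then 1 else 0 := by
  rw [sqf, Multiset.toFinsupp_apply]
  split_ifs with h
  · exact Multiset.count_eq_one_of_mem S.nodup h
  · exact Multiset.count_eq_zero_of_notMem h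

lemma degMon_sqf (S : Finset ℕ) : degMon (sqf S) = S.card :=
  Multiset.toFinsupp_sum_eq S.val

lemma sqf_support (S : Finset ℕ) : (sqf S).support = S := by
  ext i; rw [Finsupp.mem_support_iff, sqf_apply]; simp

lemma sqf_le {S : Finset ℕ} {a : Mon} (h : S ⊆ a.support) : sqf S ≤ a := by
  intro i
  rw [sqf_apply]
  split_ifs with hi
  · exact Nat.one_le_iff_ne_zero.2 (Finsupp.mem_support_iff.1 (h hi))
  · exact Nat.zero_le _

/-- A monomial whose support contains `R` is `x_R`, or some variable can be split off without
losing this property. -/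
lemma eq_sqf_or_exists {R : Finset ℕ} {a : Mon} (h : R ⊆ a.support) :
    a = sqf R ∨ ∃ j b, a = b + Finsupp.single j 1 ∧ R ⊆ b.support := by
  by_cases he : a = sqf R
  · exact Or.inl he
  right
  obtain ⟨j, hj⟩ : ∃ j, sqf R j < a j := by
    by_contra! hcon
    exact he (le_antisymm hcon (sqf_le h))
  have hja : Finsupp.single j 1 ≤ a := by
    rw [Finsupp.single_le_iff]; omega
  refine ⟨j, a - Finsupp.single j 1, (tsub_add_cancel_of_le hja).symm, fun i hi => ?_⟩
  have h1 := Finsupp.mem_support_iff.1 (h hi)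
  rw [Finsupp.mem_support_iff, Finsupp.tsub_apply]
  by_cases hij : j = i
  · subst hij
    rw [sqf_apply, if_pos hi] at hj
    simp only [Finsupp.single_eq_same]
    omega
  · rw [Finsupp.single_eq_of_ne (Ne.symm hij)]; omega

lemma mono_add (a b : Mon) : mono K (a + b) = mono K a * mono K b := by
  simp [mono, MvPolynomial.monomial_mul]

lemma mono_single (j : ℕ) : mono K (Finsupp.single j 1) = MvPolynomial.X j := rfl

lemma mono_hom {a : Mon} {i : ℕ} (h : degMon a = i) :
    mono K a ∈ MvPolynomial.homogeneousSubmodule ℕ K i :=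
  MvPolynomial.isHomogeneous_monomial _ h

lemma mono_mem_of_nonface {n : ℕ} {Γ : Finset (Finset ℕ)} {a : Mon} (h : a.support ∉ Γ) :
    mono K a ∈ SRideal K n Γ ⊔ outsideIdeal K n := by
  by_cases hs : a.support ⊆ Finset.Icc 1 n
  · apply Ideal.mem_sup_left
    have h1 : mono K (sqf a.support) ∈ SRideal K n Γ := Ideal.subset_span ⟨_, hs, h, rfl⟩
    rw [← tsub_add_cancel_of_le (sqf_le (Finset.Subset.refl a.support)), mono_add]
    exact Ideal.mul_mem_left _ _ h1
  · apply Ideal.mem_sup_right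
    obtain ⟨j, hj, hjn⟩ := Finset.not_subset.1 hs
    have h1 : (MvPolynomial.X j : MvPolynomial ℕ K) ∈ outsideIdeal K n := by
      refine Ideal.subset_span ⟨j, ?_, rfl⟩
      rw [Finset.mem_Icc] at hjn
      omega
    have h2 : Finsupp.single j 1 ≤ a := by
      rw [Finsupp.single_le_iff]
      exact Nat.one_le_iff_ne_zero.2 (Finsupp.mem_support_iff.1 hj)
    rw [← tsub_add_cancel_of_le h2, mono_add, mono_single]
    exact Ideal.mul_mem_left _ _ h1

/-- A submodule containing all monomials of degree `i` contains all forms of degree `i`. -/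
lemma hom_le_of_mono {W : Submodule K (MvPolynomial ℕ K)} {i : ℕ}
    (h : ∀ a, degMon a = i → mono K a ∈ W) :
    MvPolynomial.homogeneousSubmodule ℕ K i ≤ W := by
  intro f hf
  rw [f.as_sum]
  refine Submodule.sum_mem _ fun a ha => ?_
  have h1 : degMon a = i := by
    have := hf (MvPolynomial.mem_support_iff.1 ha)
    rw [degMon_eq_degree, Finsupp.degree_eq_weight_one]
    exact this
  have := W.smul_mem (f.coeff a) (h a h1)
  rwa [mono, MvPolynomial.smul_monomial, smul_eq_mul, mul_one] at this

/-! ### Vandermonde linear forms -/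

/-- The linear form `∑_{i=1}^n t_i^k x_i`.  Any `e` distinct columns of the matrix of the first
`e` of these forms are independent when the `t_i` are distinct. -/
noncomputable def vform (t : ℕ → K) (n k : ℕ) : MvPolynomial ℕ K :=
  ∑ i ∈ Finset.Icc 1 n, MvPolynomial.C (t i ^ k) * MvPolynomial.X i

lemma vform_isLinForm (t : ℕ → K) (n k : ℕ) : IsLinForm K n (vform t n k) := by
  constructor
  · refine Submodule.sum_mem _ fun i _ => ?_
    rw [← MvPolynomial.smul_eq_C_mul]
    exact Submodule.smul_mem _ _ (MvPolynomial.isHomogeneous_X K i)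
  · refine (MvPolynomial.vars_sum_subset _ _).trans (Finset.biUnion_subset.2 fun i hi => ?_)
    refine (MvPolynomial.vars_mul _ _).trans ?_
    rw [MvPolynomial.vars_C, MvPolynomial.vars_X, Finset.empty_union]
    exact Finset.singleton_subset_iff.2 hi

/-- Modulo the first `e` Vandermonde forms, a variable indexed by a set `G` with at most `e`
elements is a combination of the variables outside `G` (Lagrange interpolation on `G`). -/
lemma X_eq_vform {t : ℕ → K} (ht : Function.Injective t) {n e : ℕ} {G : Finset ℕ}
    (hG : G ⊆ Finset.Icc 1 n) (hc : G.card ≤ e) {j : ℕ} (hj : j ∈ G) :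
    ∃ a b : ℕ → K, (MvPolynomial.X j : MvPolynomial ℕ K) =
      ∑ k ∈ Finset.range e, a k • vform t n k +
        ∑ l ∈ Finset.Icc 1 n \ G, b l • MvPolynomial.X l := by
  set p := Lagrange.basis G t j with hp
  have hdeg : p.natDegree < e := by
    rw [hp, Lagrange.natDegree_basis ht.injOn hj]
    have := Finset.card_pos.2 ⟨j, hj⟩
    omega
  refine ⟨p.coeff, fun l => - p.eval (t l), ?_⟩
  have h1 : ∑ k ∈ Finset.range e, p.coeff k • vform t n k =
      ∑ i ∈ Finset.Icc 1 n, p.eval (t i) • (MvPolynomial.X i : MvPolynomial ℕ K) := by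
    simp only [vform, Finset.smul_sum]
    rw [Finset.sum_comm]
    refine Finset.sum_congr rfl fun i _ => ?_
    rw [Polynomial.eval_eq_sum_range' hdeg, Finset.sum_smul]
    refine Finset.sum_congr rfl fun k _ => ?_
    rw [← MvPolynomial.smul_eq_C_mul, smul_smul]
  have h2 : ∑ i ∈ G, p.eval (t i) • (MvPolynomial.X i : MvPolynomial ℕ K) =
      MvPolynomial.X j := by
    rw [Finset.sum_eq_single j]
    · rw [hp, Lagrange.eval_basis_self ht.injOn hj, one_smul]
    · intro i hi hij
      rw [hp, Lagrange.eval_basis_of_ne (Ne.symm hij) hi, zero_smul]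
    · exact fun h => absurd hj h
  rw [h1, ← Finset.sum_sdiff hG, h2]
  simp only [neg_smul, Finset.sum_neg_distrib]
  ring

section restriction
variable {d : ℕ}

/-- Restriction to the facet `F`, followed by the inverse of the coordinate change given by the
Vandermonde forms on `F`: variables outside `F` are killed, and the `k`-th form goes to `y_k`. -/
noncomputable def psi (d : ℕ) (t : ℕ → K) (F : Finset ℕ) :
    MvPolynomial ℕ K →ₐ[K] MvPolynomial (Fin (d + 1)) K :=
  MvPolynomial.aeval fun i => if i ∈ F then
    ∑ l : Fin (d + 1), (Lagrange.basis F t i).coeff l • MvPolynomial.X l else 0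

/-- The embedding of parameter rings `y_k ↦ ∑_i t_i^k x_i`. -/
noncomputable def chi (d : ℕ) (t : ℕ → K) (n : ℕ) :
    MvPolynomial (Fin (d + 1)) K →ₐ[K] MvPolynomial ℕ K :=
  MvPolynomial.aeval fun k => vform t n k

lemma psi_vform {t : ℕ → K} (ht : Function.Injective t) {n : ℕ} {F : Finset ℕ}
    (hF : F ⊆ Finset.Icc 1 n) (hc : F.card = d + 1) (k : Fin (d + 1)) :
    psi d t F (vform t n k) = MvPolynomial.X k := by
  have hX : (Polynomial.X ^ (k : ℕ) : Polynomial K) =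
      ∑ i ∈ F, Polynomial.C (t i ^ (k : ℕ)) * Lagrange.basis F t i := by
    have := Lagrange.eq_interpolate (f := (Polynomial.X ^ (k : ℕ) : Polynomial K))
      (s := F) (v := t) ht.injOn (by
        rw [Polynomial.degree_X_pow, hc]
        exact_mod_cast k.2)
    rw [Lagrange.interpolate_apply] at this
    simpa using this
  rw [vform, map_sum, ← Finset.sum_subset hF]
  · have h1 : ∀ i ∈ F, psi d t F (MvPolynomial.C (t i ^ (k : ℕ)) * MvPolynomial.X i) =
        ∑ l : Fin (d + 1), (Polynomial.C (t i ^ (k : ℕ)) * Lagrange.basis F t i).coeff l •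
          (MvPolynomial.X l : MvPolynomial (Fin (d + 1)) K) := by
      intro i hi
      rw [← MvPolynomial.smul_eq_C_mul, map_smul, psi, MvPolynomial.aeval_X, if_pos hi,
        Finset.smul_sum]
      refine Finset.sum_congr rfl fun l _ => ?_
      rw [smul_smul, Polynomial.coeff_C_mul]
    rw [Finset.sum_congr rfl h1, Finset.sum_comm]
    simp only [← Finset.sum_smul, ← Polynomial.finsetSum_coeff]
    rw [← hX, Finset.sum_eq_single k]
    · simp
    · intro l _ hl
      rw [Polynomial.coeff_X_pow, if_neg (fun h => hl (Fin.ext h)), zero_smul]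
    · simp
  · intro i _ hi
    rw [← MvPolynomial.smul_eq_C_mul, map_smul, psi, MvPolynomial.aeval_X, if_neg hi, smul_zero]

lemma psi_chi {t : ℕ → K} (ht : Function.Injective t) {n : ℕ} {F : Finset ℕ}
    (hF : F ⊆ Finset.Icc 1 n) (hc : F.card = d + 1) (p : MvPolynomial (Fin (d + 1)) K) :
    psi d t F (chi d t n p) = p := by
  have : (psi d t F).comp (chi d t n) = AlgHom.id K _ := by
    apply MvPolynomial.algHom_ext
    intro k
    simp only [AlgHom.comp_apply, AlgHom.id_apply]
    rw [chi, MvPolynomial.aeval_X, psi_vform ht hF hc]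
  exact DFunLike.congr_fun this p

lemma psi_X_of_notMem {t : ℕ → K} {F : Finset ℕ} {i : ℕ} (h : i ∉ F) :
    psi d t F (MvPolynomial.X i) = 0 := by
  rw [psi, MvPolynomial.aeval_X, if_neg h]

lemma psi_X_ne_zero {t : ℕ → K} (ht : Function.Injective t) {F : Finset ℕ} (hc : F.card = d + 1)
    {i : ℕ} (h : i ∈ F) : psi d t F (MvPolynomial.X i) ≠ 0 := by
  rw [psi, MvPolynomial.aeval_X, if_pos h]
  intro h0
  apply Lagrange.basis_ne_zero (s := F) (v := t) ht.injOn h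
  have hnat := Lagrange.natDegree_basis (s := F) (v := t) ht.injOn h
  ext l
  rw [Polynomial.coeff_zero]
  rcases lt_or_ge l (d + 1) with hl | hl
  · have h1 := congrArg (MvPolynomial.coeff (Finsupp.single (⟨l, hl⟩ : Fin (d + 1)) 1)) h0
    rw [MvPolynomial.coeff_sum, Finset.sum_eq_single ⟨l, hl⟩] at h1
    · simpa using h1
    · intro m _ hm
      rw [MvPolynomial.coeff_smul, MvPolynomial.coeff_X, if_neg, smul_zero]
      intro h2
      exact hm (Finsupp.single_left_injective one_ne_zero h2)
    · simp
  · exact Polynomial.coeff_eq_zero_of_natDegree_lt (by omega)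

lemma mono_sqf (S : Finset ℕ) : mono K (sqf S) = ∏ i ∈ S, MvPolynomial.X i := by
  rw [mono, MvPolynomial.monomial_eq, Finsupp.prod, sqf_support, map_one, one_mul]
  refine Finset.prod_congr rfl fun i hi => ?_
  rw [sqf_apply, if_pos hi, pow_one]

lemma psi_sqf_eq_zero {t : ℕ → K} {F S : Finset ℕ} (h : ¬ S ⊆ F) :
    psi d t F (mono K (sqf S)) = 0 := by
  obtain ⟨i, hi, hiF⟩ := Finset.not_subset.1 h
  rw [mono_sqf, map_prod]
  exact Finset.prod_eq_zero hi (psi_X_of_notMem hiF)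

lemma psi_sqf_ne_zero {t : ℕ → K} (ht : Function.Injective t) {F S : Finset ℕ}
    (hc : F.card = d + 1) (h : S ⊆ F) : psi d t F (mono K (sqf S)) ≠ 0 := by
  rw [mono_sqf, map_prod]
  exact Finset.prod_ne_zero_iff.2 fun i hi => psi_X_ne_zero ht hc (h hi)

end restriction

/-! ### The Stanley–Reisner ring of the ball over its parameter ring -/

section ball
variable {n d : ℕ} {U : Finset Mon}

/-- The straightening induction.  A submodule contains all monomials of degree `D` as soon as it
contains those supported on nonfaces, those monomials `x_{R(u)}` which have degree `D`, and all
products of one of the `d + 1` Vandermonde forms with a monomial of degree `D - 1`.  For a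
monomial `x_{R(u)} x_j g` with `j ∈ F_d(u)`, the variable `x_j` is rewritten in terms of variables
outside `F_d(u)`; the resulting monomials lie in intervals of smaller rank. -/
lemma straighten (hn : d < n) (hU : IsShiftedOrderIdeal (n - d - 1) U)
    (hdeg : ∀ u ∈ U, degMon u ≤ d / 2) {t : ℕ → K} (ht : Function.Injective t)
    (W : Submodule K (MvPolynomial ℕ K)) (D : ℕ)
    (h1 : ∀ a, degMon a = D → a.support ∉ squeezedBall n d U → mono K a ∈ W)
    (h2 : ∀ b, degMon b + 1 = D → ∀ k < d + 1, vform t n k * mono K b ∈ W)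
    (h3 : ∀ u ∈ U, degMon u = D → mono K (sqf (restr n d u)) ∈ W) :
    ∀ a, degMon a = D → mono K a ∈ W := by
  have key : ∀ r, ∀ v ∈ U, rk n d v = r → ∀ a, degMon a = D → restr n d v ⊆ a.support →
      a.support ⊆ Fface n d v → mono K a ∈ W := by
    intro r
    induction r using Nat.strong_induction_on with
    | _ r ih =>
      intro v hv hr a ha hR hF
      rcases eq_sqf_or_exists hR with rfl | ⟨j, b, rfl, hRb⟩
      · refine h3 v hv ?_
        rw [← ha, degMon_sqf, card_restr hn hU hv]
      · have hj : j ∈ Fface n d v := hF (by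
          rw [Finsupp.mem_support_iff, Finsupp.add_apply, Finsupp.single_eq_same]; omega)
        have hb : degMon b + 1 = D := by rw [← ha, degMon_add, degMon_single]
        obtain ⟨c, c', hX⟩ := X_eq_vform ht (Fface_subset hn hU hdeg hv)
          (card_Fface hn hU hdeg hv).le hj
        rw [mono_add, mono_single, hX, mul_comm, add_mul, Finset.sum_mul, Finset.sum_mul]
        refine Submodule.add_mem _ (Submodule.sum_mem _ fun k hk => ?_)
          (Submodule.sum_mem _ fun l hl => ?_)
        · rw [smul_mul_assoc]
          exact W.smul_mem _ (h2 b hb k (Finset.mem_range.1 hk))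
        · rw [smul_mul_assoc]
          refine W.smul_mem _ ?_
          rw [Finset.mem_sdiff] at hl
          rw [mul_comm, ← mono_single, ← mono_add]
          have hd' : degMon (b + Finsupp.single l 1) = D := by
            rw [degMon_add, degMon_single, hb]
          by_cases hball : (b + Finsupp.single l 1).support ∈ squeezedBall n d U
          · obtain ⟨w, hw, hw1, hw2⟩ := exists_interval hn hU hdeg hball
            have hlw : l ∈ Fface n d w := hw2 (by
              rw [Finsupp.mem_support_iff, Finsupp.add_apply, Finsupp.single_eq_same]; omega)
            have hRw : restr n d v ⊆ Fface n d w := fun i hi => hw2 (by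
              have := Finsupp.mem_support_iff.1 (hRb hi)
              rw [Finsupp.mem_support_iff, Finsupp.add_apply]; omega)
            rcases eq_or_rk_lt hn hU hdeg hv hw hRw with rfl | hlt
            · exact absurd hlw hl.2
            · exact ih _ (hr ▸ hlt) w hw rfl _ hd' hw1 hw2
          · exact h1 _ hd' hball
  intro a ha
  by_cases hball : a.support ∈ squeezedBall n d U
  · obtain ⟨v, hv, hv1, hv2⟩ := exists_interval hn hU hdeg hball
    exact key _ v hv rfl a ha hv1 hv2
  · exact h1 a ha hball

/-- The ideal of `S_[∞]` with quotient the Stanley–Reisner ring of the ball `B_d(U)`. -/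
noncomputable def ballIdeal (K : Type) [Field K] (n d : ℕ) (U : Finset Mon) :
    Ideal (MvPolynomial ℕ K) :=
  SRideal K n (squeezedBall n d U) ⊔ outsideIdeal K n

/-- The combination `∑_{u ∈ U} p_u(Θ) x_{R(u)}` with coefficients from the parameter ring. -/
noncomputable def comb (t : ℕ → K) (n d : ℕ) (U : Finset Mon)
    (p : Mon → MvPolynomial (Fin (d + 1)) K) : MvPolynomial ℕ K :=
  ∑ u ∈ U, chi d t n (p u) * mono K (sqf (restr n d u))

lemma comb_add (t : ℕ → K) (p q : Mon → MvPolynomial (Fin (d + 1)) K) :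
    comb t n d U (p + q) = comb t n d U p + comb t n d U q := by
  simp only [comb, ← Finset.sum_add_distrib, Pi.add_apply, map_add, add_mul]

lemma comb_mul (t : ℕ → K) (y : MvPolynomial (Fin (d + 1)) K)
    (p : Mon → MvPolynomial (Fin (d + 1)) K) :
    comb t n d U (fun u => y * p u) = chi d t n y * comb t n d U p := by
  simp only [comb, Finset.mul_sum, map_mul, mul_assoc]

/-- The `x_{R(u)}` span the Stanley–Reisner ring of the ball over the parameter ring. -/
lemma exists_comb (hn : d < n) (hU : IsShiftedOrderIdeal (n - d - 1) U)
    (hdeg : ∀ u ∈ U, degMon u ≤ d / 2) {t : ℕ → K} (ht : Function.Injective t)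
    (f : MvPolynomial ℕ K) : ∃ p, f - comb t n d U p ∈ ballIdeal K n d U := by
  let W : Submodule K (MvPolynomial ℕ K) :=
    { carrier := {f | ∃ p, f - comb t n d U p ∈ ballIdeal K n d U}
      zero_mem' := ⟨fun _ => 0, by simp [comb]⟩
      add_mem' := by
        rintro f g ⟨p, hp⟩ ⟨q, hq⟩
        refine ⟨p + q, ?_⟩
        rw [comb_add, add_sub_add_comm]
        exact Ideal.add_mem _ hp hq
      smul_mem' := by
        rintro c f ⟨p, hp⟩
        refine ⟨fun u => MvPolynomial.C c * p u, ?_⟩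
        rw [comb_mul, chi, MvPolynomial.aeval_C, MvPolynomial.smul_eq_C_mul,
          MvPolynomial.algebraMap_eq, ← mul_sub]
        exact Ideal.mul_mem_left _ _ hp }
  have hmono : ∀ D, ∀ a, degMon a = D → mono K a ∈ W := by
    intro D
    induction D with
    | zero =>
      refine straighten hn hU hdeg ht W 0 ?_ ?_ ?_
      · exact fun a _ ha => ⟨fun _ => 0, by simpa [comb, ballIdeal] using mono_mem_of_nonface ha⟩
      · intro b hb; omega
      · intro u hu _
        refine ⟨fun v => if v = u then 1 else 0, ?_⟩
        rw [comb, Finset.sum_eq_single u (by intro v _ hv; simp [hv]) (fun h => absurd hu h)]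
        simp
    | succ D ih =>
      refine straighten hn hU hdeg ht W (D + 1) ?_ ?_ ?_
      · exact fun a _ ha => ⟨fun _ => 0, by simpa [comb, ballIdeal] using mono_mem_of_nonface ha⟩
      · intro b hb k hk
        obtain ⟨p, hp⟩ := ih b (by omega)
        refine ⟨fun u => MvPolynomial.X ⟨k, hk⟩ * p u, ?_⟩
        rw [comb_mul, chi, MvPolynomial.aeval_X, ← mul_sub]
        exact Ideal.mul_mem_left _ _ hp
      · intro u hu _
        refine ⟨fun v => if v = u then 1 else 0, ?_⟩
        rw [comb, Finset.sum_eq_single u (by intro v _ hv; simp [hv]) (fun h => absurd hu h)]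
        simp
  have hW : f ∈ W := by
    rw [← MvPolynomial.sum_homogeneousComponent f]
    exact Submodule.sum_mem _ fun i _ =>
      hom_le_of_mono (hmono i) (MvPolynomial.homogeneousComponent_mem i f)
  exact hW

lemma psi_ballIdeal (hn : d < n) (hU : IsShiftedOrderIdeal (n - d - 1) U)
    (hdeg : ∀ u ∈ U, degMon u ≤ d / 2) (t : ℕ → K) {v : Mon} (hv : v ∈ U)
    {f : MvPolynomial ℕ K} (hf : f ∈ ballIdeal K n d U) : psi d t (Fface n d v) f = 0 := by
  have hle : ballIdeal K n d U ≤ RingHom.ker (psi d t (Fface n d v)) := by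
    refine sup_le (Ideal.span_le.2 ?_) (Ideal.span_le.2 ?_)
    · rintro _ ⟨S, -, hS, rfl⟩
      exact psi_sqf_eq_zero fun h => hS (mem_squeezedBall.2 ⟨v, hv, h⟩)
    · rintro _ ⟨j, hj, rfl⟩
      refine psi_X_of_notMem fun h => ?_
      have := Finset.mem_Icc.1 (Fface_subset hn hU hdeg hv h)
      omega
  exact hle hf

/-- The `x_{R(u)}` are independent over the parameter ring modulo the ideal of the ball: restrict
to the facet of largest rank with a nonzero coefficient. -/
lemma comb_eq_zero (hn : d < n) (hU : IsShiftedOrderIdeal (n - d - 1) U)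
    (hdeg : ∀ u ∈ U, degMon u ≤ d / 2) {t : ℕ → K} (ht : Function.Injective t)
    {p : Mon → MvPolynomial (Fin (d + 1)) K} (h : comb t n d U p ∈ ballIdeal K n d U) :
    ∀ u ∈ U, p u = 0 := by
  by_contra! hcon
  obtain ⟨u, hu, hpu⟩ := hcon
  obtain ⟨v, hv, hmax⟩ := Finset.exists_max_image (U.filter fun u => p u ≠ 0) (rk n d)
    ⟨u, Finset.mem_filter.2 ⟨hu, hpu⟩⟩
  rw [Finset.mem_filter] at hv
  have h0 := psi_ballIdeal hn hU hdeg t hv.1 h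
  rw [comb, map_sum, Finset.sum_eq_single v, map_mul,
    psi_chi ht (Fface_subset hn hU hdeg hv.1) (card_Fface hn hU hdeg hv.1)] at h0
  · exact (mul_ne_zero hv.2 (psi_sqf_ne_zero ht (card_Fface hn hU hdeg hv.1)
      (restr_subset hn hdeg hv.1))) h0
  · intro w hw hwv
    rw [map_mul, psi_chi ht (Fface_subset hn hU hdeg hv.1) (card_Fface hn hU hdeg hv.1)]
    by_cases hpw : p w = 0
    · rw [hpw, zero_mul]
    · rw [psi_sqf_eq_zero, mul_zero]
      intro hsub
      have h1 := hmax w (Finset.mem_filter.2 ⟨hw, hpw⟩)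
      rcases eq_or_rk_lt hn hU hdeg hw hv.1 hsub with h2 | h2
      · exact hwv h2
      · omega
  · exact fun hn' => absurd hv.1 hn'

/-- In the polynomial ring, the last variable is a nonzerodivisor modulo the others. -/
lemma mem_span_X_of_mul {y : MvPolynomial (Fin (d + 1)) K}
    (h : MvPolynomial.X (Fin.last d) * y ∈
      Ideal.span (MvPolynomial.X '' Set.range (Fin.castSucc (n := d)))) :
    y ∈ Ideal.span (MvPolynomial.X '' Set.range (Fin.castSucc (n := d))) := by
  rw [MvPolynomial.mem_ideal_span_X_image] at h ⊢
  intro m hm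
  obtain ⟨i, ⟨k, rfl⟩, hi⟩ := h (m + Finsupp.single (Fin.last d) 1) (by
    rw [MvPolynomial.mem_support_iff, add_comm m, MvPolynomial.coeff_X_mul]
    exact MvPolynomial.mem_support_iff.1 hm)
  refine ⟨_, ⟨k, rfl⟩, ?_⟩
  rwa [Finsupp.add_apply, Finsupp.single_eq_of_ne (Fin.castSucc_lt_last k).ne,
    add_zero] at hi

/-- The last Vandermonde form is a nonzerodivisor on the Stanley–Reisner ring of the ball modulo
the first `d` of them. -/
lemma ball_regular (hn : d < n) (hU : IsShiftedOrderIdeal (n - d - 1) U)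
    (hdeg : ∀ u ∈ U, degMon u ≤ d / 2) {t : ℕ → K} (ht : Function.Injective t)
    {f : MvPolynomial ℕ K}
    (h : vform t n d * f ∈ fullIdeal K n d (squeezedBall n d U) fun k => vform t n k) :
    f ∈ fullIdeal K n d (squeezedBall n d U) fun k => vform t n k := by
  have hfull : fullIdeal K n d (squeezedBall n d U) (fun k => vform t n k) =
      ballIdeal K n d U ⊔ Ideal.span (Set.range fun k : Fin d => vform t n k) := by
    rw [fullIdeal, ballIdeal, sup_right_comm]
  rw [hfull] at h ⊢
  obtain ⟨g, hg, s, hs, hgs⟩ := Submodule.mem_sup.1 h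
  obtain ⟨c, rfl⟩ := Ideal.mem_span_range_iff_exists_fun.1 hs
  obtain ⟨p, hp⟩ := exists_comb hn hU hdeg ht f
  choose q hq using fun k => exists_comb hn hU hdeg ht (c k)
  have hz : comb t n d U (fun u => MvPolynomial.X (Fin.last d) * p u) -
      ∑ k : Fin d, comb t n d U (fun u => MvPolynomial.X k.castSucc * q k u) ∈
        ballIdeal K n d U := by
    have e1 : comb t n d U (fun u => MvPolynomial.X (Fin.last d) * p u) =
        vform t n d * comb t n d U p := by
      rw [comb_mul, chi, MvPolynomial.aeval_X]; rfl
    have e2 : ∀ k : Fin d, comb t n d U (fun u => MvPolynomial.X k.castSucc * q k u) =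
        vform t n k * comb t n d U (q k) := by
      intro k
      rw [comb_mul, chi, MvPolynomial.aeval_X]; rfl
    simp only [e1, e2]
    have e3 : vform t n d * comb t n d U p - ∑ k : Fin d, vform t n k * comb t n d U (q k) =
        g - vform t n d * (f - comb t n d U p) +
          ∑ k : Fin d, vform t n k * (c k - comb t n d U (q k)) := by
      simp only [mul_sub, Finset.sum_sub_distrib]
      rw [← hgs]
      have : ∑ k : Fin d, c k * vform t n k = ∑ k : Fin d, vform t n k * c k :=
        Finset.sum_congr rfl fun k _ => mul_comm _ _
      rw [this]
      ring
    rw [e3]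
    exact Ideal.add_mem _ (Ideal.sub_mem _ hg (Ideal.mul_mem_left _ _ hp))
      (Ideal.sum_mem _ fun k _ => Ideal.mul_mem_left _ _ (hq k))
  have hz' : comb t n d U (fun u => MvPolynomial.X (Fin.last d) * p u -
      ∑ k : Fin d, MvPolynomial.X k.castSucc * q k u) ∈ ballIdeal K n d U := by
    convert hz using 1
    simp only [comb, map_sub, map_sum, sub_mul, Finset.sum_mul, Finset.sum_sub_distrib]
    rw [Finset.sum_comm]
  have hpu : ∀ u ∈ U, chi d t n (p u) ∈ Ideal.span (Set.range fun k : Fin d => vform t n k) := by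
    intro u hu
    have h0 := sub_eq_zero.1 (comb_eq_zero hn hU hdeg ht hz' u hu)
    have h1 : p u ∈ Ideal.span (MvPolynomial.X '' Set.range (Fin.castSucc (n := d))) := by
      apply mem_span_X_of_mul
      rw [h0]
      exact Ideal.sum_mem _ fun k _ => Ideal.mul_mem_right _ _
        (Ideal.subset_span ⟨_, ⟨k, rfl⟩, rfl⟩)
    have h2 := Ideal.mem_map_of_mem (chi d t n) h1
    rw [Ideal.map_span] at h2
    refine Ideal.span_mono ?_ h2
    rintro _ ⟨_, ⟨_, ⟨k, rfl⟩, rfl⟩, rfl⟩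
    refine ⟨k, ?_⟩
    simp [chi]
  rw [← sub_add_cancel f (comb t n d U p)]
  exact Ideal.add_mem _ (Ideal.mem_sup_left hp) (Ideal.mem_sup_right
    (Ideal.sum_mem _ fun u hu => Ideal.mul_mem_right _ _ (hpu u hu)))

end ball

/-! ### Passage to the boundary sphere -/

section sphere
variable {n d : ℕ} {U : Finset Mon}

attribute [local instance] MvPolynomial.gradedAlgebra

lemma fullIdeal_isHomogeneous (Γ : Finset (Finset ℕ)) (t : ℕ → K) :
    (fullIdeal K n d Γ fun k => vform t n k).IsHomogeneous
      (MvPolynomial.homogeneousSubmodule ℕ K) := by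
  rw [fullIdeal, SRideal, outsideIdeal, ← Ideal.span_union, ← Ideal.span_union]
  refine Ideal.homogeneous_span _ _ ?_
  rintro x ((⟨S, -, -, rfl⟩ | ⟨k, rfl⟩) | ⟨j, -, rfl⟩)
  · exact ⟨_, mono_hom rfl⟩
  · exact ⟨1, (vform_isLinForm t n k).1⟩
  · exact ⟨1, MvPolynomial.isHomogeneous_X K j⟩

lemma fullIdeal_ball_le (θ : Fin d → MvPolynomial ℕ K) :
    fullIdeal K n d (squeezedBall n d U) θ ≤ fullIdeal K n d (squeezedSphere n d U) θ := by
  refine sup_le_sup_right (sup_le_sup_right (Ideal.span_mono ?_) _) _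
  rintro _ ⟨S, hS, hS', rfl⟩
  exact ⟨S, hS, fun h => hS' (sphere_subset_ball h), rfl⟩

/-- The ideals of the ball and of the sphere differ only in degrees greater than `d / 2`. -/
lemma fullIdeal_sphere_le (hn : d < n) (hU : IsShiftedOrderIdeal (n - d - 1) U)
    (hdeg : ∀ u ∈ U, degMon u ≤ d / 2) (θ : Fin d → MvPolynomial ℕ K) :
    fullIdeal K n d (squeezedSphere n d U) θ ≤ fullIdeal K n d (squeezedBall n d U) θ ⊔
      Ideal.span ((fun s => MvPolynomial.monomial s (1 : K)) '' {a : Mon | d / 2 < degMon a}) := by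
  refine sup_le (sup_le (Ideal.span_le.2 ?_) ?_) ?_
  · rintro _ ⟨S, hS, hS', rfl⟩
    by_cases hc : S.card ≤ d / 2
    · refine Ideal.mem_sup_left (Ideal.mem_sup_left (Ideal.mem_sup_left (Ideal.subset_span
        ⟨S, hS, fun h => hS' (mem_sphere_of_card_le hn hU hdeg h hc), rfl⟩)))
    · refine Ideal.mem_sup_right (Ideal.subset_span ⟨sqf S, ?_, rfl⟩)
      rw [Set.mem_ofPred_eq, degMon_sqf]
      omega
  · exact (le_sup_right.trans le_sup_left).trans le_sup_left
  · exact le_sup_right.trans le_sup_left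

lemma mem_ball_of_mem_sphere (hn : d < n) (hU : IsShiftedOrderIdeal (n - d - 1) U)
    (hdeg : ∀ u ∈ U, degMon u ≤ d / 2) (t : ℕ → K) {f : MvPolynomial ℕ K} {i : ℕ}
    (hi : i ≤ d / 2) (hf : f ∈ MvPolynomial.homogeneousSubmodule ℕ K i)
    (h : f ∈ fullIdeal K n d (squeezedSphere n d U) fun k => vform t n k) :
    f ∈ fullIdeal K n d (squeezedBall n d U) fun k => vform t n k := by
  obtain ⟨x, hx, q, hq, rfl⟩ := Submodule.mem_sup.1 (fullIdeal_sphere_le hn hU hdeg _ h)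
  have h1 := MvPolynomial.homogeneousComponent_of_mem (m := i) hf
  rw [if_pos rfl] at h1
  have h2 : MvPolynomial.homogeneousComponent i q = 0 := by
    ext a
    rw [MvPolynomial.coeff_homogeneousComponent, MvPolynomial.coeff_zero]
    split_ifs with ha
    · by_contra hne
      obtain ⟨s, hs, hsa⟩ := MvPolynomial.mem_ideal_span_monomial_image.1 hq a
        (MvPolynomial.mem_support_iff.2 hne)
      have h3 : degMon a = i := ha
      have h4 : d / 2 < degMon s := hs
      rw [← tsub_add_cancel_of_le hsa, degMon_add] at h3
      omega
    · rfl
  rw [← h1, map_add, h2, add_zero]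
  exact MvPolynomial.homogeneousComponent_mem_of_mem (fullIdeal_isHomogeneous _ t) hx i

lemma fullIdeal_nonface {Γ : Finset (Finset ℕ)} (θ : Fin d → MvPolynomial ℕ K) {a : Mon}
    (h : a.support ∉ Γ) : mono K a ∈ fullIdeal K n d Γ θ := by
  refine (sup_le_sup_right le_sup_left _ : _ ≤ fullIdeal K n d Γ θ) (mono_mem_of_nonface h)

lemma vform_mem_fullIdeal (Γ : Finset (Finset ℕ)) (t : ℕ → K) {k : ℕ} (hk : k < d) :
    vform t n k ∈ fullIdeal K n d Γ fun k => vform t n k :=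
  Ideal.mem_sup_left (Ideal.mem_sup_right (Ideal.subset_span ⟨⟨k, hk⟩, rfl⟩))

/-- Modulo the first `d` Vandermonde forms, every polynomial is congruent to a combination of
squarefree monomials: if a variable `x_j` occurs twice in a monomial with support `G`, rewriting
one copy in terms of variables outside `G` enlarges the support. -/
lemma finite_quotient {Γ : Finset (Finset ℕ)} (hΓ : ∀ G ∈ Γ, G.card ≤ d)
    {t : ℕ → K} (ht : Function.Injective t) :
    Module.Finite K (MvPolynomial ℕ K ⧸ fullIdeal K n d Γ fun k => vform t n k) := by
  set N := fullIdeal K n d Γ fun k => vform t n k with hN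
  set V : Submodule K (MvPolynomial ℕ K) :=
    Submodule.span K ((fun S => mono K (sqf S)) '' ((Finset.Icc 1 n).powerset : Set (Finset ℕ)))
    with hV
  set W : Submodule K (MvPolynomial ℕ K) := N.restrictScalars K ⊔ V with hW
  have hmemN : ∀ {f}, f ∈ N → f ∈ W := fun h => Submodule.mem_sup_left h
  have key : ∀ r, ∀ a : Mon, d - a.support.card = r → mono K a ∈ W := by
    intro r
    induction r using Nat.strong_induction_on with
    | _ r ih =>
      intro a hr
      by_cases hface : a.support ∈ Γ
      swap
      · exact hmemN (fullIdeal_nonface _ hface)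
      by_cases hsub : a.support ⊆ Finset.Icc 1 n
      swap
      · obtain ⟨j, hj, hjn⟩ := Finset.not_subset.1 hsub
        have h1 : Finsupp.single j 1 ≤ a :=
          Finsupp.single_le_iff.2 (Nat.one_le_iff_ne_zero.2 (Finsupp.mem_support_iff.1 hj))
        rw [← tsub_add_cancel_of_le h1, mono_add, mono_single]
        refine hmemN (Ideal.mul_mem_left _ _ (Ideal.mem_sup_right (Ideal.subset_span
          ⟨j, ?_, rfl⟩)))
        rw [Finset.mem_Icc] at hjn
        omega
      have hc := hΓ _ hface
      rcases eq_sqf_or_exists (Finset.Subset.refl a.support) with he | ⟨j, b, he, hb⟩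
      · rw [he]
        exact Submodule.mem_sup_right (Submodule.subset_span
          ⟨a.support, Finset.mem_coe.2 (Finset.mem_powerset.2 hsub), rfl⟩)
      · have hj : j ∈ a.support := by
          rw [he, Finsupp.mem_support_iff, Finsupp.add_apply, Finsupp.single_eq_same]; omega
        obtain ⟨c, c', hX⟩ := X_eq_vform ht hsub hc hj
        rw [he, mono_add, mono_single, hX, mul_comm, add_mul, Finset.sum_mul, Finset.sum_mul]
        refine Submodule.add_mem _ (Submodule.sum_mem _ fun k hk => ?_)
          (Submodule.sum_mem _ fun l hl => ?_)
        · rw [smul_mul_assoc]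
          exact W.smul_mem _ (hmemN (Ideal.mul_mem_right _ _
            (vform_mem_fullIdeal _ t (Finset.mem_range.1 hk))))
        · rw [smul_mul_assoc]
          refine W.smul_mem _ ?_
          rw [Finset.mem_sdiff] at hl
          rw [mul_comm, ← mono_single, ← mono_add]
          have hss : insert l a.support ⊆ (b + Finsupp.single l 1).support := by
            intro i hi
            rw [Finsupp.mem_support_iff, Finsupp.add_apply]
            rcases Finset.mem_insert.1 hi with rfl | hi
            · rw [Finsupp.single_eq_same]; omega
            · have := Finsupp.mem_support_iff.1 (hb hi)
              omega
          have hcard := Finset.card_le_card hss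
          rw [Finset.card_insert_of_notMem hl.2] at hcard
          by_cases hd' : (b + Finsupp.single l 1).support ∈ Γ
          · have := hΓ _ hd'
            exact ih _ (by omega) _ rfl
          · exact hmemN (fullIdeal_nonface _ hd')
  have hall : ∀ f : MvPolynomial ℕ K, f ∈ W := fun f => by
    rw [f.as_sum]
    refine Submodule.sum_mem _ fun a _ => ?_
    have : MvPolynomial.monomial a (f.coeff a) = f.coeff a • mono K a := by
      rw [mono, MvPolynomial.smul_monomial, smul_eq_mul, mul_one]
    rw [this]
    exact W.smul_mem _ (key _ a rfl)
  have hVfin : V.FG := Submodule.fg_span ((Finset.finite_toSet _).image _)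
  refine ⟨?_⟩
  have htop : (⊤ : Submodule K (MvPolynomial ℕ K ⧸ N)) =
      V.map (Ideal.Quotient.mkₐ K N).toLinearMap := by
    refine (eq_top_iff.2 fun y _ => ?_).symm
    obtain ⟨f, rfl⟩ := Ideal.Quotient.mk_surjective y
    obtain ⟨g, hg, v, hv, rfl⟩ := Submodule.mem_sup.1 (hall f)
    refine ⟨v, hv, ?_⟩
    change Ideal.Quotient.mk N v = Ideal.Quotient.mk N (g + v)
    rw [map_add, Ideal.Quotient.eq_zero_iff_mem.2 hg, zero_add]
  rw [htop]
  exact hVfin.map _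

lemma sphere_mulInjOn (hn : d < n) (hU : IsShiftedOrderIdeal (n - d - 1) U)
    (hdeg : ∀ u ∈ U, degMon u ≤ d / 2) {t : ℕ → K} (ht : Function.Injective t) {i : ℕ}
    (hi1 : 1 ≤ i) (hi : i ≤ d / 2) :
    mulInjOn K (fullIdeal K n d (squeezedSphere n d U) fun k => vform t n k)
      (vform t n d) (i - 1) i := by
  rintro _ _ ⟨f, hf, rfl⟩ ⟨g, hg, rfl⟩ h
  refine Ideal.Quotient.eq.2 (fullIdeal_ball_le _ (ball_regular hn hU hdeg ht ?_))
  refine mem_ball_of_mem_sphere hn hU hdeg t hi ?_ ?_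
  · have := MvPolynomial.IsHomogeneous.mul (vform_isLinForm t n d).1 (Submodule.sub_mem _ hf hg)
    rwa [show 1 + (i - 1) = i by omega] at this
  · rw [mul_sub]
    refine Ideal.Quotient.eq.1 ?_
    rw [map_mul, map_mul]
    exact h

lemma sphere_mulSurjOnto (hn : d < n) (hU : IsShiftedOrderIdeal (n - d - 1) U)
    (hdeg : ∀ u ∈ U, degMon u ≤ d / 2) {t : ℕ → K} (ht : Function.Injective t) {i : ℕ}
    (hi : d / 2 < i) :
    mulSurjOnto K (fullIdeal K n d (squeezedSphere n d U) fun k => vform t n k)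
      (vform t n d) (i - 1) i := by
  rintro _ ⟨f, hf, rfl⟩
  set N := fullIdeal K n d (squeezedSphere n d U) fun k => vform t n k with hN
  set W : Submodule K (MvPolynomial ℕ K) := N.restrictScalars K ⊔
    Submodule.map (LinearMap.mulLeft K (vform t n d))
      (MvPolynomial.homogeneousSubmodule ℕ K (i - 1)) with hW
  have hfW : f ∈ W := by
    refine hom_le_of_mono (straighten hn hU hdeg ht W i ?_ ?_ ?_) hf
    · exact fun a _ ha => Submodule.mem_sup_left (fullIdeal_ball_le _ (fullIdeal_nonface _ ha))
    · intro b hb k hk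
      rcases Nat.lt_succ_iff_lt_or_eq.1 hk with hk | rfl
      · exact Submodule.mem_sup_left (Ideal.mul_mem_right _ _ (vform_mem_fullIdeal _ t hk))
      · exact Submodule.mem_sup_right ⟨mono K b, mono_hom (by omega), rfl⟩
    · intro u hu hui
      have := hdeg u hu
      omega
  obtain ⟨g, hg, _, ⟨v, hv, rfl⟩, rfl⟩ := Submodule.mem_sup.1 hfW
  refine ⟨_, ⟨v, hv, rfl⟩, ?_⟩
  change Ideal.Quotient.mk N _ * Ideal.Quotient.mk N v =
    Ideal.Quotient.mk N (g + vform t n d * v)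
  rw [map_add, Ideal.Quotient.eq_zero_iff_mem.2 hg, zero_add, map_mul]

end sphere

end alg

end SqueezedSpheres

namespace SqueezedSpheres

/-- **Corollary (Murai, Cor. 4.3).** Every S-squeezed sphere has the weak
Lefschetz property. -/
theorem squeezedSphere_hasWLP (K : Type) [Field K] [Infinite K]
    (n d : ℕ) (hd : 0 < d) (hn : d < n) (U : Finset Mon)
    (hU : IsShiftedOrderIdeal (n - d - 1) U)
    (hdeg : ∀ u ∈ U, degMon u ≤ d / 2) :
    HasWLP K n d (squeezedSphere n d U) := by
  have ht := (Infinite.natEmbedding K).injective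
  exact ⟨fun k => vform (Infinite.natEmbedding K) n k, vform (Infinite.natEmbedding K) n d,
    ⟨fun k => vform_isLinForm _ n k, finite_quotient (fun _ => card_le_of_mem_sphere) ht⟩,
    vform_isLinForm _ n d, fun i hi1 hi => sphere_mulInjOn hn hU hdeg ht hi1 hi,
    fun i hi => sphere_mulSurjOnto hn hU hdeg ht hi⟩

end SqueezedSpheres
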